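/- arXiv:2202.06647 — 9 statements merged into one kernel-verified Lean document; each statement's English description precedes it below -/
import Mathlib

section
/- Let (H_X, H_Z) be a CSS code with parameters (n, r_X, r_Z) admitting a ZX-duality (τ_n, τ_X, τ_Z). Then the direct sum code C ⊕ C admits a ZX-duality whose qubit bijection on Fin n ⊕ Fin n has no fixed points; concretely, the bijection sending Sum.inl j ↦ Sum.inr (τ_n j) and Sum.inr j ↦ Sum.inl (τ_n j) is fixed-point free and extends (with suitable bijections on the check index sets) to a ZX-duality of C ⊕ C. -/
/-- A CSS code: `H_X * H_Zᵀ = 0`. -/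
def IsCSS {q rX rZ : Type*} [Fintype q] (HX : Matrix rX q (ZMod 2)) (HZ : Matrix rZ q (ZMod 2)) : Prop :=
  HX * HZ.transpose = 0

/-- A ZX-duality of a CSS code `(H_X, H_Z)` with qubit index type `q`
and check index types `rX`, `rZ`. -/
def IsZXDuality {q rX rZ : Type*} (HX : Matrix rX q (ZMod 2)) (HZ : Matrix rZ q (ZMod 2))
    (τn : q ≃ q) (τX : rX ≃ rZ) (τZ : rZ ≃ rX) : Prop :=
  (∀ i j, HZ (τX i) (τn j) = HX i j) ∧ (∀ i j, HX (τZ i) (τn j) = HZ i j)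

/-- If a CSS code `C = (H_X, H_Z)` admits a ZX-duality `(τ_n, τ_X, τ_Z)`, then the direct
sum code `C ⊕ C` admits a ZX-duality whose qubit bijection
`Sum.inl j ↦ Sum.inr (τ_n j)`, `Sum.inr j ↦ Sum.inl (τ_n j)` has no fixed points. -/
theorem directSum_zxDuality_fixedPointFree {n rX rZ : ℕ}
    (HX : Matrix (Fin rX) (Fin n) (ZMod 2)) (HZ : Matrix (Fin rZ) (Fin n) (ZMod 2))
    (hCSS : IsCSS HX HZ)
    (τn : Fin n ≃ Fin n) (τX : Fin rX ≃ Fin rZ) (τZ : Fin rZ ≃ Fin rX)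
    (hτ : IsZXDuality HX HZ τn τX τZ) :
    (∀ j : Fin n ⊕ Fin n, ((Equiv.sumCongr τn τn).trans (Equiv.sumComm (Fin n) (Fin n))) j ≠ j) ∧
    ∃ (τX₂ : Fin rX ⊕ Fin rX ≃ Fin rZ ⊕ Fin rZ) (τZ₂ : Fin rZ ⊕ Fin rZ ≃ Fin rX ⊕ Fin rX),
      IsZXDuality (Matrix.fromBlocks HX 0 0 HX) (Matrix.fromBlocks HZ 0 0 HZ)
        ((Equiv.sumCongr τn τn).trans (Equiv.sumComm (Fin n) (Fin n))) τX₂ τZ₂ := by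
  obtain ⟨h1, h2⟩ := hτ
  refine ⟨?_, (Equiv.sumCongr τX τX).trans (Equiv.sumComm _ _),
    (Equiv.sumCongr τZ τZ).trans (Equiv.sumComm _ _), ?_, ?_⟩
  · rintro (j | j) <;> simp
  · rintro (i | i) (j | j) <;> simp [h1]
  · rintro (i | i) (j | j) <;> simp [h2]
end

section
/- Let R₅,₅ be the presented group on generators a, b, c with relations a², b², c², (ab)⁵, (ac)², (bc)⁵, and let R₅,₄ be the presented group on generators d, e, f with relations d², e², f², (de)⁵, (df)², (ef)⁴. Then there exists an injective group homomorphism ψ : R₅,₅ → R₅,₄ with ψ(a) = e, ψ(b) = d, ψ(c) = f·e·f, and for every x ∈ R₅,₅ one has ψ(φ(x)) = f · ψ(x) · f, where φ is the automorphism of R₅,₅ swapping a and c and fixing b. -/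
namespace Stmt5

/-- Free-group generators (used as `a, b, c` for `R₅,₅` and `d, e, f` for `R₅,₄`). -/
def g0 : FreeGroup (Fin 3) := FreeGroup.of 0
def g1 : FreeGroup (Fin 3) := FreeGroup.of 1
def g2 : FreeGroup (Fin 3) := FreeGroup.of 2

/-- Relators of `R₅,₅ = ⟨a, b, c | a², b², c², (ab)⁵, (ac)², (bc)⁵⟩`,
with `a = g0`, `b = g1`, `c = g2`. -/
def rels55 : Set (FreeGroup (Fin 3)) :=
  {g0 ^ 2, g1 ^ 2, g2 ^ 2, (g0 * g1) ^ 5, (g0 * g2) ^ 2, (g1 * g2) ^ 5}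

/-- Relators of `R₅,₄ = ⟨d, e, f | d², e², f², (de)⁵, (df)², (ef)⁴⟩`,
with `d = g0`, `e = g1`, `f = g2`. -/
def rels54 : Set (FreeGroup (Fin 3)) :=
  {g0 ^ 2, g1 ^ 2, g2 ^ 2, (g0 * g1) ^ 5, (g0 * g2) ^ 2, (g1 * g2) ^ 4}

abbrev R55 := PresentedGroup rels55
abbrev R54 := PresentedGroup rels54

/-- `a`, `b`, `c` in `R₅,₅`. -/
def a : R55 := PresentedGroup.of 0
def b : R55 := PresentedGroup.of 1
def c : R55 := PresentedGroup.of 2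

/-- `d`, `e`, `f` in `R₅,₄`. -/
def d : R54 := PresentedGroup.of 0
def e : R54 := PresentedGroup.of 1
def f : R54 := PresentedGroup.of 2

theorem a_sq : a * a = 1 := by
  have h : PresentedGroup.mk rels55 (g0 ^ 2) = 1 :=
    PresentedGroup.one_of_mem (by simp [rels55])
  rw [map_pow, pow_two] at h; exact h
theorem b_sq : b * b = 1 := by
  have h : PresentedGroup.mk rels55 (g1 ^ 2) = 1 :=
    PresentedGroup.one_of_mem (by simp [rels55])
  rw [map_pow, pow_two] at h; exact h
theorem c_sq : c * c = 1 := by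
  have h : PresentedGroup.mk rels55 (g2 ^ 2) = 1 :=
    PresentedGroup.one_of_mem (by simp [rels55])
  rw [map_pow, pow_two] at h; exact h
theorem ab_pow : (a * b) ^ 5 = 1 := by
  have h : PresentedGroup.mk rels55 ((g0 * g1) ^ 5) = 1 :=
    PresentedGroup.one_of_mem (by simp [rels55])
  rw [map_pow, map_mul] at h; exact h
theorem ac_pow : (a * c) ^ 2 = 1 := by
  have h : PresentedGroup.mk rels55 ((g0 * g2) ^ 2) = 1 :=
    PresentedGroup.one_of_mem (by simp [rels55])
  rw [map_pow, map_mul] at h; exact h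
theorem bc_pow : (b * c) ^ 5 = 1 := by
  have h : PresentedGroup.mk rels55 ((g1 * g2) ^ 5) = 1 :=
    PresentedGroup.one_of_mem (by simp [rels55])
  rw [map_pow, map_mul] at h; exact h
theorem d_sq : d * d = 1 := by
  have h : PresentedGroup.mk rels54 (g0 ^ 2) = 1 :=
    PresentedGroup.one_of_mem (by simp [rels54])
  rw [map_pow, pow_two] at h; exact h
theorem e_sq : e * e = 1 := by
  have h : PresentedGroup.mk rels54 (g1 ^ 2) = 1 :=
    PresentedGroup.one_of_mem (by simp [rels54])
  rw [map_pow, pow_two] at h; exact h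
theorem f_sq : f * f = 1 := by
  have h : PresentedGroup.mk rels54 (g2 ^ 2) = 1 :=
    PresentedGroup.one_of_mem (by simp [rels54])
  rw [map_pow, pow_two] at h; exact h
theorem de_pow : (d * e) ^ 5 = 1 := by
  have h : PresentedGroup.mk rels54 ((g0 * g1) ^ 5) = 1 :=
    PresentedGroup.one_of_mem (by simp [rels54])
  rw [map_pow, map_mul] at h; exact h
theorem df_pow : (d * f) ^ 2 = 1 := by
  have h : PresentedGroup.mk rels54 ((g0 * g2) ^ 2) = 1 :=
    PresentedGroup.one_of_mem (by simp [rels54])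
  rw [map_pow, map_mul] at h; exact h
theorem ef_pow : (e * f) ^ 4 = 1 := by
  have h : PresentedGroup.mk rels54 ((g1 * g2) ^ 4) = 1 :=
    PresentedGroup.one_of_mem (by simp [rels54])
  rw [map_pow, map_mul] at h; exact h

theorem swap_pow {G : Type*} [Group G] {x y : G} (hx : x * x = 1) (hy : y * y = 1) {n : ℕ}
    (h : (x * y) ^ n = 1) : (y * x) ^ n = 1 := by
  have hx' : x⁻¹ = x := inv_eq_of_mul_eq_one_left hx
  have hy' : y⁻¹ = y := inv_eq_of_mul_eq_one_left hy
  have : y * x = (x * y)⁻¹ := by rw [mul_inv_rev, hx', hy']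
  rw [this, inv_pow, h, inv_one]

theorem exists_lift55 {G : Type*} [Group G] (x y z : G) (hx : x * x = 1) (hy : y * y = 1)
    (hz : z * z = 1) (hxy : (x * y) ^ 5 = 1) (hxz : (x * z) ^ 2 = 1) (hyz : (y * z) ^ 5 = 1) :
    ∃ F : R55 →* G, F a = x ∧ F b = y ∧ F c = z := by
  have h : ∀ r ∈ rels55, FreeGroup.lift ![x, y, z] r = 1 := by
    intro r hr
    rcases hr with rfl | rfl | rfl | rfl | rfl | rfl <;>
      simp only [g0, g1, g2, map_pow, map_mul, FreeGroup.lift_apply_of] <;>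
      first
        | exact (pow_two _).trans hx
        | exact (pow_two _).trans hy
        | exact (pow_two _).trans hz
        | assumption
  exact ⟨PresentedGroup.toGroup h, PresentedGroup.toGroup.of h, PresentedGroup.toGroup.of h,
    PresentedGroup.toGroup.of h⟩

theorem exists_lift54 {G : Type*} [Group G] (x y z : G) (hx : x * x = 1) (hy : y * y = 1)
    (hz : z * z = 1) (hxy : (x * y) ^ 5 = 1) (hxz : (x * z) ^ 2 = 1) (hyz : (y * z) ^ 4 = 1) :
    ∃ F : R54 →* G, F d = x ∧ F e = y ∧ F f = z := by
  have h : ∀ r ∈ rels54, FreeGroup.lift ![x, y, z] r = 1 := by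
    intro r hr
    rcases hr with rfl | rfl | rfl | rfl | rfl | rfl <;>
      simp only [g0, g1, g2, map_pow, map_mul, FreeGroup.lift_apply_of] <;>
      first
        | exact (pow_two _).trans hx
        | exact (pow_two _).trans hy
        | exact (pow_two _).trans hz
        | assumption
  exact ⟨PresentedGroup.toGroup h, PresentedGroup.toGroup.of h, PresentedGroup.toGroup.of h,
    PresentedGroup.toGroup.of h⟩

theorem hom_ext55 {G : Type*} [Group G] {F F' : R55 →* G} (ha : F a = F' a) (hb : F b = F' b)
    (hc : F c = F' c) : F = F' := by
  apply PresentedGroup.ext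
  intro i
  fin_cases i
  · exact ha
  · exact hb
  · exact hc

/-- There is an injective group homomorphism `ψ : R₅,₅ → R₅,₄` with
`ψ(a) = e`, `ψ(b) = d`, `ψ(c) = f·e·f`, intertwining the automorphism `φ` of `R₅,₅`
(which swaps `a` and `c` and fixes `b`) with conjugation by `f`. -/
theorem exists_injective_hom_R55_to_R54 :
    ∃ (ψ : R55 →* R54) (φ : R55 ≃* R55),
      Function.Injective ψ ∧
      ψ a = e ∧ ψ b = d ∧ ψ c = f * e * f ∧
      φ a = c ∧ φ b = b ∧ φ c = a ∧
      ∀ x : R55, ψ (φ x) = f * ψ x * f := by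
  have hfi : f⁻¹ = f := inv_eq_of_mul_eq_one_left f_sq
  -- the map into the group with presentation (5,4)
  have hdf : f * d * f = d := by
    have h := df_pow
    have hdi : d⁻¹ = d := inv_eq_of_mul_eq_one_left d_sq
    rw [pow_two, mul_assoc] at h
    have h2 := eq_inv_of_mul_eq_one_right h
    rw [hdi, ← mul_assoc] at h2
    exact h2
  have hcc : f * e * f * (f * e * f) = 1 := by
    calc f * e * f * (f * e * f) = f * (e * (f * f) * e) * f := by group
      _ = 1 := by rw [f_sq, mul_one, e_sq, mul_one, f_sq]
  have hac : (e * (f * e * f)) ^ 2 = 1 := by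
    calc (e * (f * e * f)) ^ 2 = (e * f) ^ 4 := by
          simp only [pow_succ, pow_zero, one_mul, mul_assoc]
      _ = 1 := ef_pow
  have hbc : (d * (f * e * f)) ^ 5 = 1 := by
    have h1 : d * (f * e * f) = f * (d * e) * f⁻¹ := by
      rw [hfi]
      calc d * (f * e * f) = (f * d * f) * (f * e * f) := by rw [hdf]
        _ = f * d * (f * f) * e * f := by group
        _ = f * (d * e) * f := by rw [f_sq]; group
    rw [h1, conj_pow, de_pow]; group
  obtain ⟨ψ, ψa, ψb, ψc⟩ := exists_lift55 e d (f * e * f) e_sq d_sq hcc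
    (swap_pow d_sq e_sq de_pow) hac hbc
  obtain ⟨φ₀, φa, φb, φc⟩ := exists_lift55 c b a c_sq b_sq a_sq
    (swap_pow b_sq c_sq bc_pow) (swap_pow a_sq c_sq ac_pow) (swap_pow a_sq b_sq ab_pow)
  have hinv : φ₀.comp φ₀ = MonoidHom.id R55 := by
    apply hom_ext55 <;> simp [φa, φb, φc]
  let φ : R55 ≃* R55 := MonoidHom.toMulEquiv φ₀ φ₀ hinv hinv
  have Φa : φ a = c := φa
  have Φb : φ b = b := φb
  have Φc : φ c = a := φc
  refine ⟨ψ, φ, ?_, ψa, ψb, ψc, Φa, Φb, Φc, ?_⟩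
  · let m : MulAut R55 := φ
    have hm : m * m = 1 := by
      ext x
      exact DFunLike.congr_fun hinv x
    let il : R55 →* R55 ⋊[MonoidHom.id (MulAut R55)] MulAut R55 := SemidirectProduct.inl
    let t : R55 ⋊[MonoidHom.id (MulAut R55)] MulAut R55 := SemidirectProduct.inr m
    have ht : t * t = 1 := by
      change SemidirectProduct.inr m * SemidirectProduct.inr m = _
      rw [← map_mul, hm, map_one]
    have hti : t⁻¹ = t := inv_eq_of_mul_eq_one_left ht
    have hconj : ∀ x, t * il x * t = il (φ x) := by
      intro x
      have := SemidirectProduct.inl_aut (φ := MonoidHom.id (MulAut R55)) m x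
      rw [map_inv] at this
      change il (φ x) = t * il x * t⁻¹ at this
      rw [this, hti]
    obtain ⟨F, Fd, Fe, Ff⟩ := exists_lift54 (il b) (il a) t
      (by rw [← map_mul, b_sq, map_one]) (by rw [← map_mul, a_sq, map_one]) ht
      (by rw [← map_mul, ← map_pow, swap_pow a_sq b_sq ab_pow, map_one])
      (by
        rw [pow_two]
        calc il b * t * (il b * t) = il b * (t * il b * t) := by group
          _ = 1 := by rw [hconj, Φb, ← map_mul, b_sq, map_one])
      (by
        calc (il a * t) ^ 4 = (il a * (t * il a * t)) ^ 2 := by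
              simp only [pow_succ, pow_zero, one_mul, mul_assoc]
          _ = 1 := by rw [hconj, Φa, ← map_mul, ← map_pow, ac_pow, map_one])
    have hF : F.comp ψ = il := by
      apply hom_ext55
      · simp [ψa, Fe]
      · simp [ψb, Fd]
      · simp only [MonoidHom.comp_apply, ψc, map_mul, Fe, Ff, hconj, Φa]
    have hinj : Function.Injective (F.comp ψ) := by
      rw [hF]; exact SemidirectProduct.inl_injective
    intro x y hxy
    exact hinj (congrArg F hxy)
  · have key : ψ.comp φ.toMonoidHom = (MulAut.conj f).toMonoidHom.comp ψ := by
      apply hom_ext55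
      · change ψ (φ a) = f * ψ a * f⁻¹
        rw [Φa, ψc, ψa, hfi]
      · change ψ (φ b) = f * ψ b * f⁻¹
        rw [Φb, ψb, hfi, hdf]
      · change ψ (φ c) = f * ψ c * f⁻¹
        rw [Φc, ψc, ψa, hfi]
        calc e = (f * f) * e * (f * f) := by rw [f_sq]; group
          _ = _ := by group
    intro x
    have := DFunLike.congr_fun key x
    change ψ (φ x) = f * ψ x * f⁻¹ at this
    rw [this, hfi]

end Stmt5
end

section
/- For every natural number l ≥ 3, let R_{l,l} be the presented group on generators a, b, c with relations a², b², c², (ab)^l, (ac)², (bc)^l, and let R_{l,4} be the presented group on generators d, e, f with relations d², e², f², (de)^l, (df)², (ef)⁴. Then there exists an injective group homomorphism R_{l,l} → R_{l,4} sending a ↦ e, b ↦ d, c ↦ f·e·f. -/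
namespace Stmt6

/-- Free-group generators. -/
def g0 : FreeGroup (Fin 3) := FreeGroup.of 0
def g1 : FreeGroup (Fin 3) := FreeGroup.of 1
def g2 : FreeGroup (Fin 3) := FreeGroup.of 2

/-- Relators of `R_{l,l} = ⟨a, b, c | a², b², c², (ab)^l, (ac)², (bc)^l⟩`,
with `a = g0`, `b = g1`, `c = g2`. -/
def relsLL (l : ℕ) : Set (FreeGroup (Fin 3)) :=
  {g0 ^ 2, g1 ^ 2, g2 ^ 2, (g0 * g1) ^ l, (g0 * g2) ^ 2, (g1 * g2) ^ l}

/-- Relators of `R_{l,4} = ⟨d, e, f | d², e², f², (de)^l, (df)², (ef)⁴⟩`,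
with `d = g0`, `e = g1`, `f = g2`. -/
def relsL4 (l : ℕ) : Set (FreeGroup (Fin 3)) :=
  {g0 ^ 2, g1 ^ 2, g2 ^ 2, (g0 * g1) ^ l, (g0 * g2) ^ 2, (g1 * g2) ^ 4}

/-- Construct homs out of `R_{l,l}`. -/
theorem exists_LL {G : Type*} [Group G] (l : ℕ) (a b c : G) (ha : a ^ 2 = 1) (hb : b ^ 2 = 1)
    (hc : c ^ 2 = 1) (hab : (a * b) ^ l = 1) (hac : (a * c) ^ 2 = 1) (hbc : (b * c) ^ l = 1) :
    ∃ φ : PresentedGroup (relsLL l) →* G, φ (PresentedGroup.of 0) = a ∧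
      φ (PresentedGroup.of 1) = b ∧ φ (PresentedGroup.of 2) = c := by
  have h : ∀ r ∈ relsLL l, FreeGroup.lift ![a, b, c] r = 1 := by
    intro r hr
    simp only [relsLL, Set.mem_insert_iff, Set.mem_singleton_iff] at hr
    rcases hr with rfl | rfl | rfl | rfl | rfl | rfl <;> simp [g0, g1, g2, *]
  exact ⟨PresentedGroup.toGroup h, by simp, by simp, by simp⟩

/-- Construct homs out of `R_{l,4}`. -/
theorem exists_L4 {G : Type*} [Group G] (l : ℕ) (a b c : G) (ha : a ^ 2 = 1) (hb : b ^ 2 = 1)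
    (hc : c ^ 2 = 1) (hab : (a * b) ^ l = 1) (hac : (a * c) ^ 2 = 1) (hbc : (b * c) ^ 4 = 1) :
    ∃ φ : PresentedGroup (relsL4 l) →* G, φ (PresentedGroup.of 0) = a ∧
      φ (PresentedGroup.of 1) = b ∧ φ (PresentedGroup.of 2) = c := by
  have h : ∀ r ∈ relsL4 l, FreeGroup.lift ![a, b, c] r = 1 := by
    intro r hr
    simp only [relsL4, Set.mem_insert_iff, Set.mem_singleton_iff] at hr
    rcases hr with rfl | rfl | rfl | rfl | rfl | rfl <;> simp [g0, g1, g2, *]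
  exact ⟨PresentedGroup.toGroup h, by simp, by simp, by simp⟩

theorem swap_pow {G : Type*} [Group G] (l : ℕ) (x y : G) (hx : x ^ 2 = 1) (hy : y ^ 2 = 1)
    (h : (x * y) ^ l = 1) : (y * x) ^ l = 1 := by
  have hx' : x⁻¹ = x := inv_eq_of_mul_eq_one_left (by rw [← pow_two, hx])
  have hy' : y⁻¹ = y := inv_eq_of_mul_eq_one_left (by rw [← pow_two, hy])
  have : y * x = (x * y)⁻¹ := by rw [mul_inv_rev, hx', hy']
  rw [this, inv_pow, h, inv_one]

theorem relLL (l : ℕ) : ∀ r ∈ relsLL l, PresentedGroup.mk (relsLL l) r = 1 :=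
  fun _ hr => PresentedGroup.one_of_mem hr

theorem relL4 (l : ℕ) : ∀ r ∈ relsL4 l, PresentedGroup.mk (relsL4 l) r = 1 :=
  fun _ hr => PresentedGroup.one_of_mem hr

/-- For every `l ≥ 3` there is an injective group homomorphism
`R_{l,l} → R_{l,4}` sending `a ↦ e`, `b ↦ d`, `c ↦ f·e·f`. -/
theorem exists_injective_hom_Rll_to_Rl4 (l : ℕ) (hl : 3 ≤ l) :
    ∃ ψ : PresentedGroup (relsLL l) →* PresentedGroup (relsL4 l),
      Function.Injective ψ ∧
      ψ (PresentedGroup.of 0) = PresentedGroup.of 1 ∧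
      ψ (PresentedGroup.of 1) = PresentedGroup.of 0 ∧
      ψ (PresentedGroup.of 2) =
        PresentedGroup.of 2 * PresentedGroup.of 1 * PresentedGroup.of 2 := by
  have hLL := relLL l
  have hL4 := relL4 l
  simp only [relsLL, relsL4, Set.mem_insert_iff, Set.mem_singleton_iff, forall_eq_or_imp,
    forall_eq, map_pow, map_mul] at hLL hL4
  obtain ⟨ha, hb, hc, hab, hac, hbc⟩ := hLL
  obtain ⟨hd, he, hf, hde, hdf, hef⟩ := hL4
  change (PresentedGroup.of 0 : PresentedGroup (relsLL l)) ^ 2 = 1 at ha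
  change (PresentedGroup.of 1 : PresentedGroup (relsLL l)) ^ 2 = 1 at hb
  change (PresentedGroup.of 2 : PresentedGroup (relsLL l)) ^ 2 = 1 at hc
  change ((PresentedGroup.of 0 : PresentedGroup (relsLL l)) * PresentedGroup.of 1) ^ l = 1 at hab
  change ((PresentedGroup.of 0 : PresentedGroup (relsLL l)) * PresentedGroup.of 2) ^ 2 = 1 at hac
  change ((PresentedGroup.of 1 : PresentedGroup (relsLL l)) * PresentedGroup.of 2) ^ l = 1 at hbc
  change (PresentedGroup.of 0 : PresentedGroup (relsL4 l)) ^ 2 = 1 at hd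
  change (PresentedGroup.of 1 : PresentedGroup (relsL4 l)) ^ 2 = 1 at he
  change (PresentedGroup.of 2 : PresentedGroup (relsL4 l)) ^ 2 = 1 at hf
  change ((PresentedGroup.of 0 : PresentedGroup (relsL4 l)) * PresentedGroup.of 1) ^ l = 1 at hde
  change ((PresentedGroup.of 0 : PresentedGroup (relsL4 l)) * PresentedGroup.of 2) ^ 2 = 1 at hdf
  change ((PresentedGroup.of 1 : PresentedGroup (relsL4 l)) * PresentedGroup.of 2) ^ 4 = 1 at hef
  -- the homomorphism
  obtain ⟨ψ, h0, h1, h2⟩ : ∃ φ : PresentedGroup (relsLL l) →* PresentedGroup (relsL4 l),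
      φ (PresentedGroup.of 0) = PresentedGroup.of 1 ∧
      φ (PresentedGroup.of 1) = PresentedGroup.of 0 ∧ φ (PresentedGroup.of 2) =
        PresentedGroup.of 2 * PresentedGroup.of 1 * PresentedGroup.of 2 := by
    generalize (PresentedGroup.of 0 : PresentedGroup (relsL4 l)) = d at *
    generalize (PresentedGroup.of 1 : PresentedGroup (relsL4 l)) = e at *
    generalize (PresentedGroup.of 2 : PresentedGroup (relsL4 l)) = f at *
    have hf' : f⁻¹ = f := inv_eq_of_mul_eq_one_left (by rw [← pow_two, hf])
    have hd' : d⁻¹ = d := inv_eq_of_mul_eq_one_left (by rw [← pow_two, hd])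
    have hcomm : d * f = f * d := by
      have := inv_eq_of_mul_eq_one_left (by rw [← pow_two, hdf] : (d * f) * (d * f) = 1)
      rw [← this, mul_inv_rev, hf', hd']
    refine exists_LL l _ _ _ he hd ?_ (swap_pow l _ _ hd he hde) ?_ ?_
    · have : f * e * f = f * e * f⁻¹ := by rw [hf']
      rw [this, conj_pow, he]; simp
    · rw [← hef]; simp only [pow_succ, pow_zero, one_mul, mul_assoc]
    · have : d * (f * e * f) = f * (d * e) * f⁻¹ := by
        rw [hf', ← mul_assoc, ← mul_assoc, hcomm]; simp only [mul_assoc]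
      rw [this, conj_pow, hde]; simp
  refine ⟨ψ, ?_, h0, h1, h2⟩
  -- the swap automorphism
  obtain ⟨s, s0, s1, s2⟩ := exists_LL l _ _ _ hc hb ha (swap_pow l _ _ hb hc hbc)
    (swap_pow 2 _ _ ha hc hac) (swap_pow l _ _ ha hb hab)
  have hss : s.comp s = MonoidHom.id _ := by
    ext i
    fin_cases i <;> simp [s0, s1, s2]
  let σ : MulAut (PresentedGroup (relsLL l)) := MonoidHom.toMulEquiv s s hss hss
  have hσ : ∀ x, σ x = s x := fun _ => rfl
  have hσσ : σ * σ = 1 := by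
    ext x
    exact DFunLike.congr_fun hss x
  obtain ⟨θ, t0, t1, t2⟩ := exists_L4
    (G := PresentedGroup (relsLL l) ⋊[MonoidHom.id (MulAut (PresentedGroup (relsLL l)))]
      MulAut (PresentedGroup (relsLL l))) l
    (SemidirectProduct.inl (PresentedGroup.of 1)) (SemidirectProduct.inl (PresentedGroup.of 0))
    (SemidirectProduct.inr σ)
    (by rw [← map_pow, hb, map_one]) (by rw [← map_pow, ha, map_one])
    (by rw [← map_pow, pow_two, hσσ, map_one])
    (by rw [← map_mul, ← map_pow, swap_pow l _ _ ha hb hab, map_one])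
    (by
      ext1
      · simp [pow_two, hσ, s1]; rw [← pow_two, hb]
      · simp [pow_two, hσσ])
    (by
      ext1
      · simp only [pow_succ, pow_zero, one_mul] at hac ⊢
        simpa [hσ, s0, s1, s2, mul_assoc] using hac
      · simp [pow_succ, hσσ])
  have key : θ.comp ψ = SemidirectProduct.inl := by
    ext i
    all_goals fin_cases i <;> simp [h0, h1, h2, t0, t1, t2, hσ, s0, hσσ]
  have : Function.Injective (θ.comp ψ) := by
    rw [key]; exact SemidirectProduct.inl_injective
  exact Function.Injective.of_comp (f := θ) (by simpa using this)

end Stmt6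
end

section
/- Let (H_X, H_Z) be a CSS code with parameters (n, r_X, r_Z) and let (τ_n, τ_X, τ_Z) be a ZX-duality of it. Then conjugation by the Hadamard-type operator H_{τ_n} maps the stabilizer group of the code onto itself: the map M ↦ H_{τ_n} * M * H_{τ_n}⁻¹ restricts to a bijection of the stabilizer group. In particular H_{τ_n} is an encoded logical gate for the code. -/
namespace Stmt8

variable {m : Type*} [Fintype m] [DecidableEq m]

/-- The Pauli operator `X^s`: entry 1 at `(u, v)` iff `u = v + s`. -/
noncomputable def PX (s : m → ZMod 2) : Matrix (m → ZMod 2) (m → ZMod 2) ℂ :=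
  fun u v => if u = v + s then 1 else 0

/-- The Pauli operator `Z^s`: diagonal with entry `∏_j (-1)^{s_j v_j}` at `v`. -/
noncomputable def PZ (s : m → ZMod 2) : Matrix (m → ZMod 2) (m → ZMod 2) ℂ :=
  Matrix.diagonal fun v => ∏ j, (-1 : ℂ) ^ ((s j).val * (v j).val)

/-- The `n`-qubit Hadamard transform, `W_{u,v} = (∏_j (-1)^{u_j v_j}) / 2^{n/2}`. -/
noncomputable def W : Matrix (m → ZMod 2) (m → ZMod 2) ℂ :=
  fun u v => (∏ j, (-1 : ℂ) ^ ((u j).val * (v j).val)) / (Real.sqrt 2 : ℂ) ^ (Fintype.card m)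

/-- The permutation matrix `P_τ`: entry 1 at `(u, v)` iff `u = v ∘ τ⁻¹`. -/
noncomputable def Pperm (τ : Equiv.Perm m) : Matrix (m → ZMod 2) (m → ZMod 2) ℂ :=
  fun u v => if u = v ∘ ⇑τ.symm then 1 else 0

/-- The Hadamard-type operator `H_τ = P_τ * W`. -/
noncomputable def Hop (τ : Equiv.Perm m) : Matrix (m → ZMod 2) (m → ZMod 2) ℂ :=
  Pperm τ * W

/-- A ZX-duality of a CSS code `(H_X, H_Z)`. -/
def IsZXDuality {q rX rZ : Type*} (HX : Matrix rX q (ZMod 2)) (HZ : Matrix rZ q (ZMod 2))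
    (τn : q ≃ q) (τX : rX ≃ rZ) (τZ : rZ ≃ rX) : Prop :=
  (∀ i j, HZ (τX i) (τn j) = HX i j) ∧ (∀ i j, HX (τZ i) (τn j) = HZ i j)

/-- The stabilizer group of the CSS code `(H_X, H_Z)`: the subgroup of the group of
invertible `2^n × 2^n` matrices generated by the `X^s` for `s` a row of `H_X` together
with the `Z^t` for `t` a row of `H_Z`. -/
noncomputable def stabilizer {rX rZ : Type*} (HX : Matrix rX m (ZMod 2))
    (HZ : Matrix rZ m (ZMod 2)) :
    Subgroup (Matrix (m → ZMod 2) (m → ZMod 2) ℂ)ˣ :=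
  Subgroup.closure
    {U | (∃ i, (U : Matrix (m → ZMod 2) (m → ZMod 2) ℂ) = PX (HX i)) ∨
         (∃ i, (U : Matrix (m → ZMod 2) (m → ZMod 2) ℂ) = PZ (HZ i))}

theorem sgn_add (a b c : ZMod 2) :
    (-1 : ℂ) ^ ((a + b).val * c.val) = (-1) ^ (a.val * c.val) * (-1) ^ (b.val * c.val) := by
  have h2 : ∀ x : ZMod 2, x = 0 ∨ x = 1 := by decide
  have e : (1 + 1 : ZMod 2) = 0 := by decide
  have v1 : (1 : ZMod 2).val = 1 := by decide
  rcases h2 a with rfl | rfl <;> rcases h2 b with rfl | rfl <;> rcases h2 c with rfl | rfl <;>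
    simp [e, v1]

theorem sgn_sum (a b : ZMod 2) :
    ∑ x : ZMod 2, (-1 : ℂ) ^ (a.val * x.val) * (-1) ^ (x.val * b.val) =
      if a = b then 2 else 0 := by
  have h2 : ∀ x : ZMod 2, x = 0 ∨ x = 1 := by decide
  have v1 : (1 : ZMod 2).val = 1 := by decide
  have hu : (Finset.univ : Finset (ZMod 2)) = {0, 1} := by decide
  have ne : (0 : ZMod 2) ≠ 1 := by decide
  rw [hu, Finset.sum_pair ne]
  rcases h2 a with rfl | rfl <;> rcases h2 b with rfl | rfl <;>
    simp [v1] <;> norm_num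

theorem W_mul_W : (W : Matrix (m → ZMod 2) (m → ZMod 2) ℂ) * W = 1 := by
  ext u v
  have hs : (Real.sqrt 2 : ℂ) ^ (Fintype.card m) * (Real.sqrt 2 : ℂ) ^ (Fintype.card m)
      = 2 ^ (Fintype.card m) := by
    rw [← mul_pow, ← Complex.ofReal_mul, Real.mul_self_sqrt (by norm_num)]
    norm_num
  have key : ∑ w : m → ZMod 2, (∏ j, (-1 : ℂ) ^ ((u j).val * (w j).val)) *
      (∏ j, (-1 : ℂ) ^ ((w j).val * (v j).val)) = ∏ j, if u j = v j then (2 : ℂ) else 0 := by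
    simp_rw [← sgn_sum, ← Finset.prod_mul_distrib]
    rw [Finset.prod_univ_sum, Fintype.piFinset_univ]
  simp only [Matrix.mul_apply, W, div_mul_div_comm, hs]
  rw [← Finset.sum_div, key, Matrix.one_apply]
  split_ifs with h
  · subst h
    simp
  · obtain ⟨j, hj⟩ := Function.ne_iff.mp h
    rw [Finset.prod_eq_zero (Finset.mem_univ j) (by simp [hj])]
    simp

theorem eq_comp_symm (τ : Equiv.Perm m) (u v : m → ZMod 2) :
    u = v ∘ ⇑τ.symm ↔ v = u ∘ ⇑τ := by
  constructor
  · rintro rfl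
    ext j
    simp
  · rintro rfl
    ext j
    simp

theorem Hop_apply (τ : Equiv.Perm m) (u v : m → ZMod 2) : Hop τ u v = W (u ∘ ⇑τ) v := by
  simp only [Hop, Matrix.mul_apply, Pperm, eq_comp_symm]
  simp

theorem Pperm_mul (τ : Equiv.Perm m) : Pperm τ * Pperm τ.symm = 1 := by
  ext u v
  simp only [Matrix.mul_apply, Pperm, eq_comp_symm τ, Matrix.one_apply]
  simp only [ite_mul, one_mul, zero_mul, Finset.sum_ite_eq', Finset.sum_ite_eq,
    Finset.mem_univ, if_true]
  congr 1
  simp only [Equiv.symm_symm, eq_iff_iff]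
  constructor
  · intro h
    ext j
    simpa using congrFun h (τ.symm j)
  · rintro rfl
    rfl

theorem Hop_mul_inv (τ : Equiv.Perm m) : Hop τ * (W * Pperm τ.symm) = 1 := by
  rw [Hop, Matrix.mul_assoc, ← Matrix.mul_assoc W, W_mul_W, Matrix.one_mul, Pperm_mul]

theorem Hop_PX (τ : Equiv.Perm m) (s t : m → ZMod 2) (h : ∀ j, t (τ j) = s j) :
    Hop τ * PX s = PZ t * Hop τ := by
  ext u v
  rw [PZ, Matrix.diagonal_mul, Matrix.mul_apply]
  simp only [PX, Hop_apply, mul_ite, mul_one, mul_zero, Finset.sum_ite_eq', Finset.sum_ite_eq,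
    Finset.mem_univ, if_true, W]
  rw [← mul_div_assoc, ← Equiv.prod_comp τ (fun j => (-1 : ℂ) ^ ((t j).val * (u j).val)), ← Finset.prod_mul_distrib]
  congr 1
  refine Finset.prod_congr rfl fun j _ => ?_
  simp only [Function.comp, h, Pi.add_apply]
  rw [mul_comm (u (τ j)).val, sgn_add]
  ring

theorem Hop_PZ (τ : Equiv.Perm m) (s t : m → ZMod 2) (h : ∀ j, t (τ j) = s j) :
    Hop τ * PZ s = PX t * Hop τ := by
  ext u v
  rw [PZ, Matrix.mul_diagonal, Matrix.mul_apply]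
  have e : ∀ w : m → ZMod 2, u = w + t ↔ w = u + t := by
    have tt : t + t = 0 := by
      ext j
      exact CharTwo.add_self_eq_zero _
    intro w
    constructor
    · rintro rfl
      rw [add_assoc, tt, add_zero]
    · rintro rfl
      rw [add_assoc, tt, add_zero]
  simp only [PX, e, Hop_apply, ite_mul, one_mul, zero_mul, Finset.sum_ite_eq',
    Finset.sum_ite_eq, Finset.mem_univ, if_true, W]
  rw [div_mul_eq_mul_div, ← Finset.prod_mul_distrib]
  congr 1
  refine Finset.prod_congr rfl fun j _ => ?_
  simp only [Function.comp, Pi.add_apply, h, sgn_add]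

/-- If `(τ_n, τ_X, τ_Z)` is a ZX-duality of the CSS code `(H_X, H_Z)`, then conjugation by
the Hadamard-type operator `H_{τ_n}` maps the stabilizer group onto itself; in particular
`H_{τ_n}` is an encoded logical gate. -/
theorem hadamardType_logical_gate {n rX rZ : ℕ}
    (HX : Matrix (Fin rX) (Fin n) (ZMod 2)) (HZ : Matrix (Fin rZ) (Fin n) (ZMod 2))
    (hCSS : HX * HZ.transpose = 0)
    (τn : Equiv.Perm (Fin n)) (τX : Fin rX ≃ Fin rZ) (τZ : Fin rZ ≃ Fin rX)
    (hτ : IsZXDuality HX HZ τn τX τZ) :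
    ∃ Hu : (Matrix (Fin n → ZMod 2) (Fin n → ZMod 2) ℂ)ˣ,
      (Hu : Matrix (Fin n → ZMod 2) (Fin n → ZMod 2) ℂ) = Hop τn ∧
      Subgroup.map (MulAut.conj Hu).toMonoidHom (stabilizer HX HZ) = stabilizer HX HZ := by
  let Hu : (Matrix (Fin n → ZMod 2) (Fin n → ZMod 2) ℂ)ˣ :=
    ⟨Hop τn, W * Pperm τn.symm, Hop_mul_inv τn, mul_eq_one_comm.mp (Hop_mul_inv τn)⟩
  have hHu : (Hu : Matrix (Fin n → ZMod 2) (Fin n → ZMod 2) ℂ) = Hop τn := rfl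
  refine ⟨Hu, hHu, ?_⟩
  obtain ⟨h1, h2⟩ := hτ
  have c1 : ∀ i, Hop τn * PX (HX i) = PZ (HZ (τX i)) * Hop τn := fun i => Hop_PX _ _ _ (h1 i)
  have c2 : ∀ i, Hop τn * PZ (HZ i) = PX (HX (τZ i)) * Hop τn := fun i => Hop_PZ _ _ _ (h2 i)
  rw [stabilizer, MonoidHom.map_closure]
  congr 1
  ext U
  constructor
  · rintro ⟨V, hV | hV, rfl⟩
    · obtain ⟨i, hi⟩ := hV
      refine Or.inr ⟨τX i, ?_⟩
      simp only [MulEquiv.toMonoidHom_eq_coe, MonoidHom.coe_coe, MulAut.conj_apply, Units.val_mul]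
      rw [Units.mul_inv_eq_iff_eq_mul, hi, hHu, c1]
    · obtain ⟨i, hi⟩ := hV
      refine Or.inl ⟨τZ i, ?_⟩
      simp only [MulEquiv.toMonoidHom_eq_coe, MonoidHom.coe_coe, MulAut.conj_apply, Units.val_mul]
      rw [Units.mul_inv_eq_iff_eq_mul, hi, hHu, c2]
  · intro hU
    refine ⟨Hu⁻¹ * U * Hu, ?_, by simp [mul_assoc]⟩
    rcases hU with ⟨i, hi⟩ | ⟨i, hi⟩
    · refine Or.inr ⟨τZ.symm i, ?_⟩
      rw [mul_assoc, Units.val_mul, Units.inv_mul_eq_iff_eq_mul, Units.val_mul, hi, hHu, c2]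
      simp
    · refine Or.inl ⟨τX.symm i, ?_⟩
      rw [mul_assoc, Units.val_mul, Units.inv_mul_eq_iff_eq_mul, Units.val_mul, hi, hHu, c1]
      simp

end Stmt8
end

section
/- Let n be a natural number and τ : Fin n ≃ Fin n a permutation with τ² = id. Then the Hadamard-type operator H_τ squares to the identity matrix: H_τ * H_τ = 1. -/
namespace Stmt9

variable {m : Type*} [Fintype m] [DecidableEq m]

/-- The `n`-qubit Hadamard transform, `W_{u,v} = (∏_j (-1)^{u_j v_j}) / 2^{n/2}`. -/
noncomputable def W : Matrix (m → ZMod 2) (m → ZMod 2) ℂ :=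
  fun u v => (∏ j, (-1 : ℂ) ^ ((u j).val * (v j).val)) / (Real.sqrt 2 : ℂ) ^ (Fintype.card m)

/-- The permutation matrix `P_τ`: entry 1 at `(u, v)` iff `u = v ∘ τ⁻¹`. -/
noncomputable def Pperm (τ : Equiv.Perm m) : Matrix (m → ZMod 2) (m → ZMod 2) ℂ :=
  fun u v => if u = v ∘ ⇑τ.symm then 1 else 0

/-- The Hadamard-type operator `H_τ = P_τ * W`. -/
noncomputable def Hop (τ : Equiv.Perm m) : Matrix (m → ZMod 2) (m → ZMod 2) ℂ :=
  Pperm τ * W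

theorem Hop_apply (τ : Equiv.Perm m) (u v : m → ZMod 2) : Hop τ u v = W (u ∘ τ) v := by
  unfold Hop
  rw [Matrix.mul_apply, Finset.sum_eq_single (u ∘ τ)]
  · have : u = (u ∘ τ) ∘ τ.symm := by ext j; simp
    simp only [Pperm]
    rw [if_pos this, one_mul]
  · intro x _ hx
    have : ¬ u = x ∘ τ.symm := by
      rintro rfl
      exact hx (by ext j; simp)
    simp [Pperm, this]
  · simp

theorem local_sum (a b : ZMod 2) :
    ∑ x : ZMod 2, (-1 : ℂ) ^ (a.val * x.val) * (-1 : ℂ) ^ (x.val * b.val)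
      = if a = b then 2 else 0 := by
  change ∑ x : Fin 2, (-1 : ℂ) ^ (a.val * ZMod.val (n := 2) x) * (-1 : ℂ) ^ (ZMod.val (n := 2) x * b.val) = _
  rw [Fin.sum_univ_two]
  fin_cases a <;> fin_cases b <;> simp [ZMod.val] <;> norm_num <;> first | rfl | exact (by decide : ¬ (0 : ZMod 2) = 1) | exact (by decide : ¬ (1 : ZMod 2) = 0)

/-- If `τ² = id` then the Hadamard-type operator `H_τ` squares to the identity. -/
theorem hadamardType_sq_eq_one {n : ℕ} (τ : Equiv.Perm (Fin n))
    (hτ : τ * τ = 1) :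
    Hop τ * Hop τ = 1 := by
  have hs : ∀ j, τ (τ j) = j := fun j => by
    rw [← Equiv.Perm.mul_apply, hτ]; rfl
  ext u w
  rw [Matrix.mul_apply]
  have h2 : (Real.sqrt 2 : ℂ) * (Real.sqrt 2 : ℂ) = 2 := by
    rw [← Complex.ofReal_mul, Real.mul_self_sqrt (by norm_num)]; norm_num
  have key : ∀ v, Hop τ u v * Hop τ v w =
      (∏ j, ((-1 : ℂ) ^ ((u (τ j)).val * (v j).val) *
        (-1 : ℂ) ^ ((v j).val * (w (τ j)).val))) / 2 ^ n := by
    intro v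
    rw [Hop_apply, Hop_apply]
    simp only [W, Function.comp, Fintype.card_fin]
    rw [div_mul_div_comm, ← mul_pow, h2, Finset.prod_mul_distrib]
    congr 2
    rw [← Equiv.prod_comp τ]
    simp only [hs]
  rw [Finset.sum_congr rfl (fun v _ => key v), ← Finset.sum_div]
  have := (Finset.prod_univ_sum (fun _ : Fin n => (Finset.univ : Finset (ZMod 2)))
    (fun j x => (-1 : ℂ) ^ ((u (τ j)).val * x.val) * (-1 : ℂ) ^ (x.val * (w (τ j)).val)))
  rw [Fintype.piFinset_univ] at this
  rw [← this]
  simp only [local_sum]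
  by_cases h : u = w
  · subst h
    simp
  · rw [Matrix.one_apply_ne h]
    obtain ⟨j, hj⟩ := Function.ne_iff.mp h
    rw [Finset.prod_eq_zero (Finset.mem_univ (τ j)), zero_div]
    rw [hs, if_neg hj]

end Stmt9
end

section
/- Let n be a natural number, τ : Fin n ≃ Fin n an involutive permutation (τ² = id) with fixed-point set F, and let A, B be disjoint sets with A ∪ B = F. Let s : Fin n → ZMod 2 with support supp(s) = {j : s j = 1}. Assume (i) |supp(s) ∩ A| = |supp(s) ∩ B|, and (ii) the number of two-element orbits {j, τ j} of τ with both elements in supp(s) is even. Then conjugation of the Pauli operator X^s by the phase-type operator S_τ (defined from τ, A, B) satisfies exactly S_τ * X^s * S_τ⁻¹ = X^s * Z^{s ∘ τ}, with no residual phase factor. -/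
namespace Stmt10

variable {q : Type*} [Fintype q] [DecidableEq q]

/-- The Pauli operator `X^s`: entry 1 at `(u, v)` iff `u = v + s`. -/
noncomputable def PX (s : q → ZMod 2) : Matrix (q → ZMod 2) (q → ZMod 2) ℂ :=
  fun u v => if u = v + s then 1 else 0

/-- The Pauli operator `Z^s`: diagonal with entry `∏_j (-1)^{s_j v_j}` at `v`. -/
noncomputable def PZ (s : q → ZMod 2) : Matrix (q → ZMod 2) (q → ZMod 2) ℂ :=
  Matrix.diagonal fun v => ∏ j, (-1 : ℂ) ^ ((s j).val * (v j).val)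

/-- The number of two-element orbits `{j, τ j}` of `τ` (with `j ≠ τ j`) on which
`v` takes the value `1` on both elements.  (Each such orbit contributes two elements
to the filtered set, whence the division by 2.) -/
def orbitCount (τ : Equiv.Perm q) (v : q → ZMod 2) : ℕ :=
  (Finset.univ.filter fun j => τ j ≠ j ∧ v j = 1 ∧ v (τ j) = 1).card / 2

/-- The phase-type operator `S_τ` associated to an involutive permutation `τ` and a
partition `A ⊔ B` of its fixed-point set: the diagonal matrix with entry
`i^{|{j ∈ A : v j = 1}|} · (-i)^{|{j ∈ B : v j = 1}|} · (-1)^{m(v)}` at `v`. -/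
noncomputable def Sop (τ : Equiv.Perm q) (A B : Finset q) :
    Matrix (q → ZMod 2) (q → ZMod 2) ℂ :=
  Matrix.diagonal fun v =>
    Complex.I ^ (A.filter fun j => v j = 1).card *
    (-Complex.I) ^ (B.filter fun j => v j = 1).card *
    (-1 : ℂ) ^ orbitCount τ v

lemma zcases (a : ZMod 2) : a = 0 ∨ a = 1 := by
  revert a; decide

lemma val_one2 : (1 : ZMod 2).val = 1 := rfl

lemma one_add2 : (1 + 1 : ZMod 2) = 0 := rfl

lemma pow_card_eq (c : ℂ) (A : Finset q) (v : q → ZMod 2) :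
    c ^ (A.filter fun j => v j = 1).card = ∏ j ∈ A, c ^ (v j).val := by
  rw [Finset.card_filter, ← Finset.prod_pow_eq_pow_sum]
  refine Finset.prod_congr rfl fun j _ => ?_
  rcases zcases (v j) with h | h <;> simp [h, val_one2]

lemma pow_add_aux (c : ℂ) (hc : c ^ 2 = -1) (a b : ZMod 2) :
    c ^ (a + b).val = c ^ a.val * c ^ b.val * (-1) ^ (b.val * a.val) := by
  rcases zcases a with h | h <;> rcases zcases b with h' | h' <;>
    simp [h, h', val_one2, one_add2]
  rw [← sq, hc]; norm_num

lemma bil_aux (a b c d : ZMod 2) :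
    (-1 : ℂ) ^ ((a + b).val * (c + d).val) =
      (-1) ^ (a.val * c.val) * (-1) ^ (b.val * d.val) *
        ((-1) ^ (d.val * a.val) * (-1) ^ (b.val * c.val)) := by
  rcases zcases a with h | h <;> rcases zcases b with h' | h' <;>
    rcases zcases c with h1 | h1 <;> rcases zcases d with h2 | h2 <;>
    simp [h, h', h1, h2, val_one2, one_add2]

lemma orbit_eq {n : ℕ} (τ : Equiv.Perm (Fin n)) (hτ : ∀ j, τ (τ j) = j) (v : Fin n → ZMod 2) :
    (-1 : ℂ) ^ orbitCount τ v =
      ∏ j ∈ Finset.univ.filter (fun j => j < τ j), (-1 : ℂ) ^ ((v j).val * (v (τ j)).val) := by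
  have e1 : orbitCount τ v =
      (Finset.univ.filter fun j => j < τ j ∧ v j = 1 ∧ v (τ j) = 1).card := by
    unfold orbitCount
    have hu : (Finset.univ.filter fun j => τ j ≠ j ∧ v j = 1 ∧ v (τ j) = 1) =
        (Finset.univ.filter fun j => j < τ j ∧ v j = 1 ∧ v (τ j) = 1) ∪
        (Finset.univ.filter fun j => τ j < j ∧ v j = 1 ∧ v (τ j) = 1) := by
      ext j
      simp only [Finset.mem_filter, Finset.mem_univ, true_and, Finset.mem_union]
      rw [ne_iff_lt_or_gt]
      tauto
    have hd : Disjoint (Finset.univ.filter fun j => j < τ j ∧ v j = 1 ∧ v (τ j) = 1)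
        (Finset.univ.filter fun j => τ j < j ∧ v j = 1 ∧ v (τ j) = 1) := by
      rw [Finset.disjoint_filter]
      intro j _ h h'
      exact lt_asymm h.1 h'.1
    have hc : (Finset.univ.filter fun j => τ j < j ∧ v j = 1 ∧ v (τ j) = 1).card =
        (Finset.univ.filter fun j => j < τ j ∧ v j = 1 ∧ v (τ j) = 1).card := by
      refine Finset.card_bij' (fun j _ => τ j) (fun j _ => τ j) ?_ ?_ ?_ ?_ <;>
        simp +contextual [hτ]
    rw [hu, Finset.card_union_of_disjoint hd, hc]
    omega
  rw [e1, ← Finset.filter_filter, Finset.card_filter, ← Finset.prod_pow_eq_pow_sum]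
  refine Finset.prod_congr rfl fun j _ => ?_
  rcases zcases (v j) with h | h <;> rcases zcases (v (τ j)) with h' | h' <;>
    simp [h, h', val_one2]

/-- diagonal entry -/
noncomputable def ph (τ : Equiv.Perm q) (A B : Finset q) (v : q → ZMod 2) : ℂ :=
    Complex.I ^ (A.filter fun j => v j = 1).card *
    (-Complex.I) ^ (B.filter fun j => v j = 1).card *
    (-1 : ℂ) ^ orbitCount τ v

lemma ph_ne (τ : Equiv.Perm q) (A B : Finset q) (v : q → ZMod 2) : ph τ A B v ≠ 0 := by
  simp [ph]

lemma split_prod {n : ℕ} (τ : Equiv.Perm (Fin n))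
    (hτ : ∀ j, τ (τ j) = j) (A B : Finset (Fin n)) (hAB : Disjoint A B)
    (hF : A ∪ B = Finset.univ.filter fun j => τ j = j) (f : Fin n → ℂ) :
    ∏ j, f j = (∏ j ∈ A, f j) * (∏ j ∈ B, f j) *
      ∏ j ∈ Finset.univ.filter (fun j => j < τ j), (f j * f (τ j)) := by
  rw [← Finset.prod_union hAB, hF, Finset.prod_mul_distrib,
    ← Finset.prod_filter_mul_prod_filter_not Finset.univ (fun j => τ j = j)]
  congr 1
  have : ∏ j ∈ Finset.univ.filter (fun j => j < τ j), f (τ j) =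
      ∏ j ∈ Finset.univ.filter (fun j => τ j < j), f j := by
    refine Finset.prod_bij' (fun j _ => τ j) (fun j _ => τ j) ?_ ?_ ?_ ?_ ?_ <;>
      simp +contextual [hτ]
  rw [this, ← Finset.prod_union]
  · congr 1
    ext j
    simp only [Finset.mem_filter, Finset.mem_univ, true_and, Finset.mem_union]
    rw [← ne_eq, ne_iff_lt_or_gt]
    tauto
  · rw [Finset.disjoint_filter]
    intro j _ h h'
    exact lt_asymm h h'

lemma ph_add {n : ℕ} (τ : Equiv.Perm (Fin n))
    (hτ : ∀ j, τ (τ j) = j) (A B : Finset (Fin n)) (hAB : Disjoint A B)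
    (hF : A ∪ B = Finset.univ.filter fun j => τ j = j) (v s : Fin n → ZMod 2) :
    ph τ A B (v + s) = ph τ A B v * ph τ A B s *
      ∏ j, (-1 : ℂ) ^ (((s ∘ τ) j).val * (v j).val) := by
  have hA : ∀ j ∈ A, τ j = j := fun j hj => by
    have : j ∈ A ∪ B := Finset.mem_union_left _ hj
    rw [hF] at this; simpa using this
  have hB : ∀ j ∈ B, τ j = j := fun j hj => by
    have : j ∈ A ∪ B := Finset.mem_union_right _ hj
    rw [hF] at this; simpa using this
  rw [split_prod τ hτ A B hAB hF]
  simp only [ph, pow_card_eq, orbit_eq τ hτ, Pi.add_apply, Function.comp_apply, hτ]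
  have a1 : ∏ j ∈ A, Complex.I ^ (v j + s j).val = (∏ j ∈ A, Complex.I ^ (v j).val) *
      (∏ j ∈ A, Complex.I ^ (s j).val) * ∏ j ∈ A, (-1 : ℂ) ^ ((s (τ j)).val * (v j).val) := by
    rw [← Finset.prod_mul_distrib, ← Finset.prod_mul_distrib]
    refine Finset.prod_congr rfl fun j hj => ?_
    rw [hA j hj, pow_add_aux _ (by simp)]
  have a2 : ∏ j ∈ B, (-Complex.I) ^ (v j + s j).val = (∏ j ∈ B, (-Complex.I) ^ (v j).val) *
      (∏ j ∈ B, (-Complex.I) ^ (s j).val) *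
        ∏ j ∈ B, (-1 : ℂ) ^ ((s (τ j)).val * (v j).val) := by
    rw [← Finset.prod_mul_distrib, ← Finset.prod_mul_distrib]
    refine Finset.prod_congr rfl fun j hj => ?_
    rw [hB j hj, pow_add_aux _ (by simp)]
  rw [a1, a2]
  simp only [bil_aux, Finset.prod_mul_distrib]
  ring

/-- Conjugating `X^s` by the phase-type operator `S_τ` yields exactly `X^s Z^{s∘τ}`,
with no residual phase, provided (i) `supp(s)` meets `A` and `B` in sets of equal size and
(ii) the number of two-element orbits of `τ` contained in `supp(s)` is even. -/
theorem phaseType_conj_paulix {n : ℕ} (τ : Equiv.Perm (Fin n))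
    (hτ : τ * τ = 1) (A B : Finset (Fin n)) (hAB : Disjoint A B)
    (hF : A ∪ B = Finset.univ.filter fun j => τ j = j)
    (s : Fin n → ZMod 2)
    (h1 : ((Finset.univ.filter fun j => s j = 1) ∩ A).card
        = ((Finset.univ.filter fun j => s j = 1) ∩ B).card)
    (h2 : Even (orbitCount τ s)) :
    Sop τ A B * PX s * (Sop τ A B)⁻¹ = PX s * PZ (s ∘ ⇑τ) := by
  have hτ' : ∀ j, τ (τ j) = j := fun j => by
    rw [← Equiv.Perm.mul_apply, hτ]; rfl
  have hs : ph τ A B s = 1 := by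
    have e : ∀ C : Finset (Fin n), (C.filter fun j => s j = 1) =
        (Finset.univ.filter fun j => s j = 1) ∩ C := by
      intro C; ext j; simp [and_comm]
    unfold ph
    rw [e A, e B, h1, h2.neg_one_pow, ← mul_pow]
    simp
  have hS : Sop τ A B = Matrix.diagonal (ph τ A B) := rfl
  have hdet : IsUnit (Sop τ A B).det := by
    rw [hS, Matrix.det_diagonal, isUnit_iff_ne_zero]
    exact Finset.prod_ne_zero_iff.mpr fun v _ => ph_ne τ A B v
  have key : Sop τ A B * PX s = PX s * PZ (s ∘ ⇑τ) * Sop τ A B := by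
    rw [hS]
    ext u v
    rw [PZ, Matrix.mul_diagonal, Matrix.mul_diagonal, Matrix.diagonal_mul]
    unfold PX
    split_ifs with h
    · rw [h, ph_add τ hτ' A B hAB hF, hs]; ring
    · simp
  rw [key, Matrix.mul_nonsing_inv_cancel_right _ _ hdet]

end Stmt10
end

section
/- Let (H_X, H_Z) be a CSS code with parameters (n, r_X, r_Z) admitting a ZX-duality (τ_n, τ_X, τ_Z) whose qubit permutation τ_n is an involution. Suppose the fixed-point set F of τ_n admits a partition F = A ⊔ B such that every row s of H_X satisfies |supp(s) ∩ A| = |supp(s) ∩ B| and contains an even number of two-element orbits {j, τ_n j} of τ_n. Then conjugation by the phase-type operator S_{τ_n} (defined from τ_n, A, B) maps the stabilizer group of the code onto itself; in particular S_{τ_n} is an encoded logical gate for the code. -/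
namespace Stmt11

variable {q : Type*} [Fintype q] [DecidableEq q]

/-- The Pauli operator `X^s`: entry 1 at `(u, v)` iff `u = v + s`. -/
noncomputable def PX (s : q → ZMod 2) : Matrix (q → ZMod 2) (q → ZMod 2) ℂ :=
  fun u v => if u = v + s then 1 else 0

/-- The Pauli operator `Z^s`: diagonal with entry `∏_j (-1)^{s_j v_j}` at `v`. -/
noncomputable def PZ (s : q → ZMod 2) : Matrix (q → ZMod 2) (q → ZMod 2) ℂ :=
  Matrix.diagonal fun v => ∏ j, (-1 : ℂ) ^ ((s j).val * (v j).val)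

/-- The number of two-element orbits `{j, τ j}` of `τ` (with `j ≠ τ j`) on which
`v` takes the value `1` on both elements. -/
def orbitCount (τ : Equiv.Perm q) (v : q → ZMod 2) : ℕ :=
  (Finset.univ.filter fun j => τ j ≠ j ∧ v j = 1 ∧ v (τ j) = 1).card / 2

/-- The phase-type operator `S_τ` associated to an involutive permutation `τ` and a
partition `A ⊔ B` of its fixed-point set. -/
noncomputable def Sop (τ : Equiv.Perm q) (A B : Finset q) :
    Matrix (q → ZMod 2) (q → ZMod 2) ℂ :=
  Matrix.diagonal fun v =>
    Complex.I ^ (A.filter fun j => v j = 1).card *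
    (-Complex.I) ^ (B.filter fun j => v j = 1).card *
    (-1 : ℂ) ^ orbitCount τ v

/-- A ZX-duality of a CSS code `(H_X, H_Z)`. -/
def IsZXDuality {q rX rZ : Type*} (HX : Matrix rX q (ZMod 2)) (HZ : Matrix rZ q (ZMod 2))
    (τn : q ≃ q) (τX : rX ≃ rZ) (τZ : rZ ≃ rX) : Prop :=
  (∀ i j, HZ (τX i) (τn j) = HX i j) ∧ (∀ i j, HX (τZ i) (τn j) = HZ i j)

/-- The stabilizer group of the CSS code `(H_X, H_Z)`. -/
noncomputable def stabilizer {rX rZ : Type*} (HX : Matrix rX q (ZMod 2))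
    (HZ : Matrix rZ q (ZMod 2)) :
    Subgroup (Matrix (q → ZMod 2) (q → ZMod 2) ℂ)ˣ :=
  Subgroup.closure
    {U | (∃ i, (U : Matrix (q → ZMod 2) (q → ZMod 2) ℂ) = PX (HX i)) ∨
         (∃ i, (U : Matrix (q → ZMod 2) (q → ZMod 2) ℂ) = PZ (HZ i))}

theorem aux_cases (x : ZMod 2) : x = 0 ∨ x = 1 := by
  revert x; decide

theorem aux_val_one : (1 : ZMod 2).val = 1 := rfl

theorem aux_filter_pow {n : ℕ} (A : Finset (Fin n)) (c : ℂ) (v : Fin n → ZMod 2) :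
    c ^ (A.filter fun j => v j = 1).card = ∏ j, if j ∈ A then c ^ (v j).val else 1 := by
  rw [← Finset.prod_const, Finset.prod_filter, Finset.prod_ite_mem, Finset.univ_inter]
  refine Finset.prod_congr rfl fun j _ => ?_
  rcases aux_cases (v j) with h | h <;> simp [h, aux_val_one]

theorem aux_orbit {n : ℕ} (τ : Equiv.Perm (Fin n)) (hτ : ∀ j, τ (τ j) = j)
    (v : Fin n → ZMod 2) :
    orbitCount τ v = (Finset.univ.filter fun j => j < τ j ∧ v j = 1 ∧ v (τ j) = 1).card := by
  unfold orbitCount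
  have h : (Finset.univ.filter fun j => τ j ≠ j ∧ v j = 1 ∧ v (τ j) = 1)
      = (Finset.univ.filter fun j => j < τ j ∧ v j = 1 ∧ v (τ j) = 1) ∪
        (Finset.univ.filter fun j => j < τ j ∧ v j = 1 ∧ v (τ j) = 1).map τ.toEmbedding := by
    ext j
    simp only [Finset.mem_filter, Finset.mem_univ, true_and, Finset.mem_union, Finset.mem_map,
      Equiv.coe_toEmbedding]
    constructor
    · rintro ⟨a, b, c⟩
      rcases lt_or_gt_of_ne a with h | h
      · exact Or.inr ⟨τ j, ⟨by rwa [hτ], c, by rwa [hτ]⟩, hτ j⟩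
      · exact Or.inl ⟨h, b, c⟩
    · rintro (⟨a, b, c⟩ | ⟨k, ⟨a, b, c⟩, rfl⟩)
      · exact ⟨a.ne', b, c⟩
      · rw [hτ]; exact ⟨a.ne, c, b⟩
  rw [h, Finset.card_union_of_disjoint, Finset.card_map]
  · omega
  · rw [Finset.disjoint_left]
    intro j hj hj'
    simp only [Finset.mem_filter, Finset.mem_univ, true_and, Finset.mem_map,
      Equiv.coe_toEmbedding] at hj hj'
    obtain ⟨k, ⟨a, _⟩, rfl⟩ := hj'
    rw [hτ] at hj
    exact absurd hj.1 (not_lt.2 a.le)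

theorem aux_orbit_pow {n : ℕ} (τ : Equiv.Perm (Fin n)) (hτ : ∀ j, τ (τ j) = j)
    (v : Fin n → ZMod 2) :
    (-1 : ℂ) ^ orbitCount τ v
      = ∏ j, if j < τ j then (-1 : ℂ) ^ ((v j).val * (v (τ j)).val) else 1 := by
  rw [aux_orbit τ hτ, ← Finset.prod_const, Finset.prod_filter]
  refine Finset.prod_congr rfl fun j _ => ?_
  by_cases h : j < τ j
  · rcases aux_cases (v j) with hx | hx <;> rcases aux_cases (v (τ j)) with hy | hy <;>
      simp [h, hx, hy, aux_val_one]
  · simp [h]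

/-- the diagonal of S -/
noncomputable def dphase {n : ℕ} (τ : Equiv.Perm (Fin n)) (A B : Finset (Fin n))
    (v : Fin n → ZMod 2) : ℂ :=
  Complex.I ^ (A.filter fun j => v j = 1).card *
    (-Complex.I) ^ (B.filter fun j => v j = 1).card *
    (-1 : ℂ) ^ orbitCount τ v

theorem aux_split {n : ℕ} (τ : Equiv.Perm (Fin n)) (hτ : ∀ j, τ (τ j) = j)
    (A B : Finset (Fin n)) (hAB : Disjoint A B)
    (hF : A ∪ B = Finset.univ.filter fun j => τ j = j) (v s : Fin n → ZMod 2) :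
    ∏ j, (-1 : ℂ) ^ ((s (τ j)).val * (v j).val)
      = (∏ j, if j ∈ A then (-1 : ℂ) ^ ((s j).val * (v j).val) else 1) *
        (∏ j, if j ∈ B then (-1 : ℂ) ^ ((s j).val * (v j).val) else 1) *
        ((∏ j, if j < τ j then (-1 : ℂ) ^ ((s (τ j)).val * (v j).val) else 1) *
         (∏ j, if j < τ j then (-1 : ℂ) ^ ((s j).val * (v (τ j)).val) else 1)) := by
  have e : (∏ j, if j < τ j then (-1 : ℂ) ^ ((s j).val * (v (τ j)).val) else 1)
      = ∏ j, if τ j < j then (-1 : ℂ) ^ ((s (τ j)).val * (v j).val) else 1 := by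
    rw [← Equiv.prod_comp τ]
    simp only [hτ]
  rw [e, ← Finset.prod_mul_distrib, ← Finset.prod_mul_distrib, ← Finset.prod_mul_distrib]
  refine Finset.prod_congr rfl fun j _ => ?_
  have hm : j ∈ A ∨ j ∈ B ↔ τ j = j := by
    rw [← Finset.mem_union, hF]; simp
  have hd : j ∈ A → j ∉ B := fun h => Finset.disjoint_left.1 hAB h
  rcases lt_trichotomy j (τ j) with h | h | h
  · have : ¬ (j ∈ A ∨ j ∈ B) := by rw [hm]; exact h.ne'
    push Not at this
    simp [this.1, this.2, h, not_lt.2 h.le]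
  · rw [← h]
    rcases hm.2 h.symm with a | a
    · simp [a, hd a]
    · have : j ∉ A := fun h => hd h a
      simp [a, this]
  · have : ¬ (j ∈ A ∨ j ∈ B) := by rw [hm]; exact h.ne
    push Not at this
    simp [this.1, this.2, h, not_lt.2 h.le]

theorem aux_pow (c : ℂ) (hc : c ^ 2 = -1) (x y : ZMod 2) :
    c ^ (x + y).val = c ^ x.val * c ^ y.val * (-1) ^ (y.val * x.val) := by
  have h1 : (1 : ZMod 2).val = 1 := rfl
  have h2 : ((1 : ZMod 2) + 1).val = 0 := rfl
  have h3 : c * c = -1 := by rw [← hc]; ring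
  rcases aux_cases x with rfl | rfl <;> rcases aux_cases y with rfl | rfl <;>
    simp [h1, h2, h3]

theorem aux_pow2 (x y x' y' : ZMod 2) :
    (-1 : ℂ) ^ ((x + y).val * (x' + y').val) = (-1) ^ (x.val * x'.val) * (-1) ^ (y.val * y'.val) *
      ((-1) ^ (y'.val * x.val) * (-1) ^ (y.val * x'.val)) := by
  have h1 : (1 : ZMod 2).val = 1 := rfl
  have h2 : ((1 : ZMod 2) + 1).val = 0 := rfl
  rcases aux_cases x with rfl | rfl <;> rcases aux_cases y with rfl | rfl <;>
    rcases aux_cases x' with rfl | rfl <;> rcases aux_cases y' with rfl | rfl <;>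
    simp [h1, h2]

theorem aux_dphase_add {n : ℕ} (τ : Equiv.Perm (Fin n)) (hτ : ∀ j, τ (τ j) = j)
    (A B : Finset (Fin n)) (hAB : Disjoint A B)
    (hF : A ∪ B = Finset.univ.filter fun j => τ j = j) (v s : Fin n → ZMod 2) :
    dphase τ A B (v + s) = dphase τ A B v * dphase τ A B s *
      ∏ j, (-1 : ℂ) ^ ((s (τ j)).val * (v j).val) := by
  rw [aux_split τ hτ A B hAB hF]
  have key : ∀ (A : Finset (Fin n)) (c : ℂ), c ^ 2 = -1 →
      (∏ j, if j ∈ A then c ^ ((v + s) j).val else 1) =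
      (∏ j, if j ∈ A then c ^ (v j).val else 1) * (∏ j, if j ∈ A then c ^ (s j).val else 1) *
      ∏ j, if j ∈ A then (-1 : ℂ) ^ ((s j).val * (v j).val) else 1 := by
    intro A c hc
    rw [← Finset.prod_mul_distrib, ← Finset.prod_mul_distrib]
    refine Finset.prod_congr rfl fun j _ => ?_
    by_cases h : j ∈ A
    · simp only [h, if_true, Pi.add_apply]; exact aux_pow c hc _ _
    · simp [h]
  have key2 : (∏ j, if j < τ j then (-1 : ℂ) ^ (((v + s) j).val * ((v + s) (τ j)).val) else 1) =
      (∏ j, if j < τ j then (-1 : ℂ) ^ ((v j).val * (v (τ j)).val) else 1) *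
      (∏ j, if j < τ j then (-1 : ℂ) ^ ((s j).val * (s (τ j)).val) else 1) *
      ((∏ j, if j < τ j then (-1 : ℂ) ^ ((s (τ j)).val * (v j).val) else 1) *
         (∏ j, if j < τ j then (-1 : ℂ) ^ ((s j).val * (v (τ j)).val) else 1)) := by
    rw [← Finset.prod_mul_distrib, ← Finset.prod_mul_distrib, ← Finset.prod_mul_distrib]
    refine Finset.prod_congr rfl fun j _ => ?_
    by_cases h : j < τ j
    · simp only [h, if_true, Pi.add_apply]; exact aux_pow2 _ _ _ _
    · simp [h]
  unfold dphase
  simp only [aux_filter_pow, aux_orbit_pow τ hτ]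
  rw [key A Complex.I (by simp), key B (-Complex.I) (by simp), key2]
  ring

theorem aux_PX_sq {n : ℕ} (s : Fin n → ZMod 2) : PX s * PX s = 1 := by
  have hs : s + s = 0 := by ext j; simp [CharTwo.add_self_eq_zero]
  ext u v
  rw [Matrix.mul_apply, Finset.sum_eq_single (v + s)]
  · simp [PX, Matrix.one_apply, add_assoc, hs]
  · intro b _ hb
    simp [PX, hb]
  · simp

theorem aux_PZ_sq {n : ℕ} (s : Fin n → ZMod 2) : PZ s * PZ s = 1 := by
  unfold PZ
  rw [Matrix.diagonal_mul_diagonal, ← Matrix.diagonal_one]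
  congr 1
  ext v
  rw [← Finset.prod_mul_distrib]
  refine Finset.prod_eq_one fun j _ => ?_
  rw [← mul_pow]; simp

/-- X as a unit -/
noncomputable def UX {n : ℕ} (s : Fin n → ZMod 2) :
    (Matrix (Fin n → ZMod 2) (Fin n → ZMod 2) ℂ)ˣ :=
  ⟨PX s, PX s, aux_PX_sq s, aux_PX_sq s⟩

/-- Z as a unit -/
noncomputable def UZ {n : ℕ} (s : Fin n → ZMod 2) :
    (Matrix (Fin n → ZMod 2) (Fin n → ZMod 2) ℂ)ˣ :=
  ⟨PZ s, PZ s, aux_PZ_sq s, aux_PZ_sq s⟩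

theorem aux_dphase_ne {n : ℕ} (τ : Equiv.Perm (Fin n)) (A B : Finset (Fin n))
    (v : Fin n → ZMod 2) : dphase τ A B v ≠ 0 := by
  simp [dphase]

/-- If the CSS code `(H_X, H_Z)` has a ZX-duality whose qubit permutation `τ_n` is an
involution, and the fixed-point set of `τ_n` is partitioned as `A ⊔ B` so that every row
`s` of `H_X` satisfies `|supp(s) ∩ A| = |supp(s) ∩ B|` and contains an even number of
two-element orbits of `τ_n`, then conjugation by the phase-type operator `S_{τ_n}` maps
the stabilizer group onto itself; in particular `S_{τ_n}` is an encoded logical gate. -/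
theorem phaseType_logical_gate {n rX rZ : ℕ}
    (HX : Matrix (Fin rX) (Fin n) (ZMod 2)) (HZ : Matrix (Fin rZ) (Fin n) (ZMod 2))
    (hCSS : HX * HZ.transpose = 0)
    (τn : Equiv.Perm (Fin n)) (τX : Fin rX ≃ Fin rZ) (τZ : Fin rZ ≃ Fin rX)
    (hτ : IsZXDuality HX HZ τn τX τZ)
    (hτ2 : τn * τn = 1)
    (A B : Finset (Fin n)) (hAB : Disjoint A B)
    (hF : A ∪ B = Finset.univ.filter fun j => τn j = j)
    (h1 : ∀ i : Fin rX,
      ((Finset.univ.filter fun j => HX i j = 1) ∩ A).card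
        = ((Finset.univ.filter fun j => HX i j = 1) ∩ B).card)
    (h2 : ∀ i : Fin rX, Even (orbitCount τn (HX i))) :
    ∃ Su : (Matrix (Fin n → ZMod 2) (Fin n → ZMod 2) ℂ)ˣ,
      (Su : Matrix (Fin n → ZMod 2) (Fin n → ZMod 2) ℂ) = Sop τn A B ∧
      Subgroup.map (MulAut.conj Su).toMonoidHom (stabilizer HX HZ) = stabilizer HX HZ := by
  have hinv : ∀ j, τn (τn j) = j := fun j => by
    rw [← Equiv.Perm.mul_apply, hτ2]; rfl
  have hSd : Sop τn A B = Matrix.diagonal (dphase τn A B) := rfl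
  let Su : (Matrix (Fin n → ZMod 2) (Fin n → ZMod 2) ℂ)ˣ :=
    ⟨Matrix.diagonal (dphase τn A B), Matrix.diagonal (fun v => (dphase τn A B v)⁻¹),
      by rw [Matrix.diagonal_mul_diagonal, ← Matrix.diagonal_one]
         congr 1; ext v; exact mul_inv_cancel₀ (aux_dphase_ne _ _ _ _),
      by rw [Matrix.diagonal_mul_diagonal, ← Matrix.diagonal_one]
         congr 1; ext v; exact inv_mul_cancel₀ (aux_dphase_ne _ _ _ _)⟩
  refine ⟨Su, hSd.symm, ?_⟩
  have hd1 : ∀ i, dphase τn A B (HX i) = 1 := by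
    intro i
    have e : ∀ C : Finset (Fin n), (C.filter fun j => HX i j = 1)
        = (Finset.univ.filter fun j => HX i j = 1) ∩ C := by
      intro C; ext j; simp [and_comm]
    unfold dphase
    rw [(h2 i).neg_one_pow, e A, e B, h1 i, ← mul_pow]
    simp
  have hZ : ∀ s, Su * UZ s = UZ s * Su := by
    intro s
    apply Units.ext
    change Matrix.diagonal _ * PZ s = PZ s * Matrix.diagonal _
    unfold PZ
    rw [Matrix.diagonal_mul_diagonal, Matrix.diagonal_mul_diagonal]
    congr 1; ext v; exact mul_comm _ _
  have hX : ∀ i, Su * UX (HX i) = UX (HX i) * UZ (HZ (τX i)) * Su := by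
    intro i
    apply Units.ext
    change Matrix.diagonal (dphase τn A B) * PX (HX i)
      = PX (HX i) * PZ (HZ (τX i)) * Matrix.diagonal (dphase τn A B)
    unfold PZ
    ext u v
    rw [Matrix.diagonal_mul, Matrix.mul_diagonal, Matrix.mul_diagonal]
    unfold PX
    by_cases h : u = v + HX i
    · have e : ∀ j, HZ (τX i) j = HX i (τn j) := fun j => by
        rw [← hτ.1 i (τn j), hinv]
      simp only [h, if_true, aux_dphase_add τn hinv A B hAB hF, hd1, e]
      ring
    · simp [h]
  have mX : ∀ i, UX (HX i) ∈ stabilizer HX HZ := fun i =>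
    Subgroup.subset_closure (Or.inl ⟨i, rfl⟩)
  have mZ : ∀ i, UZ (HZ i) ∈ stabilizer HX HZ := fun i =>
    Subgroup.subset_closure (Or.inr ⟨i, rfl⟩)
  have cZ : ∀ s, MulAut.conj Su (UZ s) = UZ s := fun s => by
    rw [MulAut.conj_apply, hZ, mul_inv_cancel_right]
  have cX : ∀ i, MulAut.conj Su (UX (HX i)) = UX (HX i) * UZ (HZ (τX i)) := fun i => by
    rw [MulAut.conj_apply, hX, mul_inv_cancel_right]
  apply le_antisymm
  · rw [Subgroup.map_le_iff_le_comap]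
    conv_lhs => unfold stabilizer
    rw [Subgroup.closure_le]
    rintro U (⟨i, hU⟩ | ⟨i, hU⟩)
    · obtain rfl : U = UX (HX i) := Units.ext hU
      change MulAut.conj Su (UX (HX i)) ∈ stabilizer HX HZ
      rw [cX]
      exact mul_mem (mX i) (mZ _)
    · obtain rfl : U = UZ (HZ i) := Units.ext hU
      change MulAut.conj Su (UZ (HZ i)) ∈ stabilizer HX HZ
      rw [cZ]
      exact mZ i
  · conv_lhs => unfold stabilizer
    rw [Subgroup.closure_le]
    rintro U (⟨i, hU⟩ | ⟨i, hU⟩)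
    · obtain rfl : U = UX (HX i) := Units.ext hU
      refine ⟨UX (HX i) * (UZ (HZ (τX i)))⁻¹, mul_mem (mX i) (inv_mem (mZ _)), ?_⟩
      change MulAut.conj Su _ = _
      rw [map_mul, map_inv, cX, cZ, mul_inv_cancel_right]
    · obtain rfl : U = UZ (HZ i) := Units.ext hU
      exact ⟨UZ (HZ i), mZ i, cZ _⟩

end Stmt11
end

section
/- Let (H_X, H_Z) be a CSS code with parameters (n, r_X, r_Z) admitting a ZX-duality (τ_n, τ_X, τ_Z) with τ_n an involution (τ_n² = id). Consider the direct sum code C ⊕ C on qubit index set Fin n ⊕ Fin n, and let CZ_τ be the diagonal 2^{2n} × 2^{2n} matrix, indexed by basis states v : (Fin n ⊕ Fin n) → ZMod 2, whose entry at v is ∏_{j : Fin n} (-1)^{v(inl j) · v(inr (τ_n j))}. Then conjugation by CZ_τ maps the stabilizer group of C ⊕ C onto itself; in particular CZ_τ is an encoded logical gate for C ⊕ C. -/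
namespace Stmt12

variable {q : Type*} [Fintype q] [DecidableEq q]

/-- The Pauli operator `X^s`: entry 1 at `(u, v)` iff `u = v + s`. -/
noncomputable def PX (s : q → ZMod 2) : Matrix (q → ZMod 2) (q → ZMod 2) ℂ :=
  fun u v => if u = v + s then 1 else 0

/-- The Pauli operator `Z^s`: diagonal with entry `∏_j (-1)^{s_j v_j}` at `v`. -/
noncomputable def PZ (s : q → ZMod 2) : Matrix (q → ZMod 2) (q → ZMod 2) ℂ :=
  Matrix.diagonal fun v => ∏ j, (-1 : ℂ) ^ ((s j).val * (v j).val)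

/-- A ZX-duality of a CSS code `(H_X, H_Z)`. -/
def IsZXDuality {q rX rZ : Type*} (HX : Matrix rX q (ZMod 2)) (HZ : Matrix rZ q (ZMod 2))
    (τn : q ≃ q) (τX : rX ≃ rZ) (τZ : rZ ≃ rX) : Prop :=
  (∀ i j, HZ (τX i) (τn j) = HX i j) ∧ (∀ i j, HX (τZ i) (τn j) = HZ i j)

/-- The stabilizer group of the CSS code `(H_X, H_Z)`. -/
noncomputable def stabilizer {rX rZ : Type*} (HX : Matrix rX q (ZMod 2))
    (HZ : Matrix rZ q (ZMod 2)) :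
    Subgroup (Matrix (q → ZMod 2) (q → ZMod 2) ℂ)ˣ :=
  Subgroup.closure
    {U | (∃ i, (U : Matrix (q → ZMod 2) (q → ZMod 2) ℂ) = PX (HX i)) ∨
         (∃ i, (U : Matrix (q → ZMod 2) (q → ZMod 2) ℂ) = PZ (HZ i))}

/-- The stacked `CZ` operator `CZ_τ` on `C ⊕ C`: the diagonal matrix whose entry at a
basis state `v : (Fin n ⊕ Fin n) → ZMod 2` is `∏_j (-1)^{v(inl j) · v(inr (τ j))}`. -/
noncomputable def CZop {n : ℕ} (τ : Equiv.Perm (Fin n)) :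
    Matrix ((Fin n ⊕ Fin n) → ZMod 2) ((Fin n ⊕ Fin n) → ZMod 2) ℂ :=
  Matrix.diagonal fun v =>
    ∏ j : Fin n, (-1 : ℂ) ^ ((v (Sum.inl j)).val * (v (Sum.inr (τ j))).val)

theorem sgn_sq (k : ℕ) : (-1 : ℂ) ^ k * (-1 : ℂ) ^ k = 1 := by
  rw [← mul_pow]; simp

theorem sgn_left (a b c : ZMod 2) :
    (-1 : ℂ) ^ ((a + b).val * c.val) * (-1 : ℂ) ^ (a.val * c.val) = (-1 : ℂ) ^ (b.val * c.val) := by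
  have h : ((a + b).val * c.val + a.val * c.val) % 2 = (b.val * c.val) % 2 := by
    revert a b c; decide
  rw [← pow_add, neg_one_pow_eq_pow_mod_two, h, ← neg_one_pow_eq_pow_mod_two]

theorem sgn_right (a b c : ZMod 2) :
    (-1 : ℂ) ^ (c.val * (a + b).val) * (-1 : ℂ) ^ (c.val * a.val) = (-1 : ℂ) ^ (b.val * c.val) := by
  rw [mul_comm c.val, mul_comm c.val, sgn_left]

theorem PZ_sq (s : q → ZMod 2) : PZ s * PZ s = 1 := by
  unfold PZ
  rw [Matrix.diagonal_mul_diagonal, ← Matrix.diagonal_one]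
  congr 1
  funext v
  rw [← Finset.prod_mul_distrib]
  exact Finset.prod_eq_one fun j _ => sgn_sq _

theorem CZ_sq {n : ℕ} (τ : Equiv.Perm (Fin n)) : CZop τ * CZop τ = 1 := by
  unfold CZop
  rw [Matrix.diagonal_mul_diagonal, ← Matrix.diagonal_one]
  congr 1
  funext v
  rw [← Finset.prod_mul_distrib]
  exact Finset.prod_eq_one fun j _ => sgn_sq _

theorem conj_PX (c : (q → ZMod 2) → ℂ) (s t : q → ZMod 2)
    (h : ∀ v, c (v + s) * c v = ∏ j, (-1 : ℂ) ^ ((t j).val * (v j).val)) :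
    Matrix.diagonal c * PX s * Matrix.diagonal c = PX s * PZ t := by
  ext u v
  unfold PZ
  rw [Matrix.mul_diagonal, Matrix.mul_diagonal, Matrix.diagonal_mul, ← h v]
  unfold PX
  split_ifs with huv
  · subst huv; ring
  · simp

/-- The unit attached to a Pauli `Z` operator. -/
noncomputable def PZu (s : q → ZMod 2) : (Matrix (q → ZMod 2) (q → ZMod 2) ℂ)ˣ :=
  ⟨PZ s, PZ s, PZ_sq s, PZ_sq s⟩

/-- The unit attached to the stacked operator. -/
noncomputable def CZu {n : ℕ} (τ : Equiv.Perm (Fin n)) :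
    (Matrix ((Fin n ⊕ Fin n) → ZMod 2) ((Fin n ⊕ Fin n) → ZMod 2) ℂ)ˣ :=
  ⟨CZop τ, CZop τ, CZ_sq τ, CZ_sq τ⟩

/-- If the CSS code `C = (H_X, H_Z)` has a ZX-duality whose qubit permutation `τ_n` is an
involution, then conjugation by `CZ_τ` maps the stabilizer group of the direct sum code
`C ⊕ C` onto itself; in particular `CZ_τ` is an encoded logical gate for `C ⊕ C`. -/
theorem stacked_cz_logical_gate {n rX rZ : ℕ}
    (HX : Matrix (Fin rX) (Fin n) (ZMod 2)) (HZ : Matrix (Fin rZ) (Fin n) (ZMod 2))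
    (hCSS : HX * HZ.transpose = 0)
    (τn : Equiv.Perm (Fin n)) (τX : Fin rX ≃ Fin rZ) (τZ : Fin rZ ≃ Fin rX)
    (hτ : IsZXDuality HX HZ τn τX τZ)
    (hτ2 : τn * τn = 1) :
    ∃ CU : (Matrix ((Fin n ⊕ Fin n) → ZMod 2) ((Fin n ⊕ Fin n) → ZMod 2) ℂ)ˣ,
      (CU : Matrix ((Fin n ⊕ Fin n) → ZMod 2) ((Fin n ⊕ Fin n) → ZMod 2) ℂ) = CZop τn ∧
      Subgroup.map (MulAut.conj CU).toMonoidHom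
          (stabilizer (Matrix.fromBlocks HX 0 0 HX) (Matrix.fromBlocks HZ 0 0 HZ))
        = stabilizer (Matrix.fromBlocks HX 0 0 HX) (Matrix.fromBlocks HZ 0 0 HZ) := by
  have hX := hτ.1
  have hinv : ∀ j, τn (τn j) = j := fun j => by
    rw [← Equiv.Perm.mul_apply, hτ2]; rfl
  refine ⟨CZu τn, rfl, ?_⟩
  set S := stabilizer (Matrix.fromBlocks HX 0 0 HX) (Matrix.fromBlocks HZ 0 0 HZ) with hS
  have hle : Subgroup.map (MulAut.conj (CZu τn)).toMonoidHom S ≤ S := by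
    rw [hS]
    conv_lhs => unfold stabilizer
    rw [MonoidHom.map_closure, Subgroup.closure_le]
    rintro _ ⟨U, hU, rfl⟩
    have hmem : U ∈ S := Subgroup.subset_closure hU
    change CZu τn * U * (CZu τn)⁻¹ ∈ S
    rcases hU with ⟨i, hi⟩ | ⟨i, hi⟩
    · have key : ∃ k, CZu τn * U * (CZu τn)⁻¹
          = U * PZu (Matrix.fromBlocks HZ 0 0 HZ k) := by
        rcases i with i | i
        · refine ⟨Sum.inr (τX i), Units.ext ?_⟩
          change CZop τn * (U : Matrix _ _ ℂ) * CZop τn = (U : Matrix _ _ ℂ) * PZ _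
          rw [hi]
          refine conj_PX _ _ _ fun v => ?_
          rw [← Finset.prod_mul_distrib, Fintype.prod_sum_type]
          simp only [Pi.add_apply, Matrix.fromBlocks_apply₁₁, Matrix.fromBlocks_apply₁₂,
            Matrix.fromBlocks_apply₂₁, Matrix.fromBlocks_apply₂₂, Matrix.zero_apply, add_zero,
            sgn_left, ZMod.val_zero, zero_mul, pow_zero, Finset.prod_const_one, one_mul]
          rw [← Equiv.prod_comp τn
            (fun j => (-1 : ℂ) ^ ((HZ (τX i) j).val * (v (Sum.inr j)).val))]
          simp only [hX]
        · refine ⟨Sum.inl (τX i), Units.ext ?_⟩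
          change CZop τn * (U : Matrix _ _ ℂ) * CZop τn = (U : Matrix _ _ ℂ) * PZ _
          rw [hi]
          refine conj_PX _ _ _ fun v => ?_
          rw [← Finset.prod_mul_distrib, Fintype.prod_sum_type]
          simp only [Pi.add_apply, Matrix.fromBlocks_apply₁₁, Matrix.fromBlocks_apply₁₂,
            Matrix.fromBlocks_apply₂₁, Matrix.fromBlocks_apply₂₂, Matrix.zero_apply, add_zero,
            sgn_right, ZMod.val_zero, zero_mul, pow_zero, Finset.prod_const_one, mul_one]
          refine Finset.prod_congr rfl fun j _ => ?_
          rw [← hX i (τn j), hinv]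
      obtain ⟨k, hk⟩ := key
      rw [hk]
      exact S.mul_mem hmem (Subgroup.subset_closure (Or.inr ⟨k, rfl⟩))
    · have : CZu τn * U * (CZu τn)⁻¹ = U := by
        rw [mul_inv_eq_iff_eq_mul]
        refine Units.ext ?_
        change CZop τn * (U : Matrix _ _ ℂ) = (U : Matrix _ _ ℂ) * CZop τn
        rw [hi]
        unfold CZop PZ
        rw [Matrix.diagonal_mul_diagonal, Matrix.diagonal_mul_diagonal]
        congr 1
        funext v
        exact mul_comm _ _
      rw [this]
      exact hmem
  refine le_antisymm hle fun x hx => ?_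
  refine ⟨CZu τn * x * (CZu τn)⁻¹, hle ⟨x, hx, rfl⟩, ?_⟩
  have hi : (CZu τn)⁻¹ = CZu τn := rfl
  have h2 : CZu τn * CZu τn = 1 := Units.ext (CZ_sq τn)
  change CZu τn * (CZu τn * x * (CZu τn)⁻¹) * (CZu τn)⁻¹ = x
  rw [hi, mul_assoc, mul_assoc, mul_assoc, h2, ← mul_assoc, h2, one_mul, mul_one]

end Stmt12
end

section
/- The presented group on three generators a, b, c with relations a², b², c², (ab)³, (ac)², (bc)³ is isomorphic to the symmetric group S₄ (i.e., Equiv.Perm (Fin 4)). -/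
namespace Stmt15

/-- The free-group generators `a`, `b`, `c`. -/
def a : FreeGroup (Fin 3) := FreeGroup.of 0
def b : FreeGroup (Fin 3) := FreeGroup.of 1
def c : FreeGroup (Fin 3) := FreeGroup.of 2

/-- Relators of the Coxeter reflection group `R₃,₃ = ⟨a, b, c | a², b², c², (ab)³, (ac)², (bc)³⟩`. -/
def rels33 : Set (FreeGroup (Fin 3)) :=
  {a ^ 2, b ^ 2, c ^ 2, (a * b) ^ 3, (a * c) ^ 2, (b * c) ^ 3}

section aux
variable {G : Type*} [Group G]

def w2 (x : G) : Fin 2 → G := ![1, x]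
def w3 (x y : G) : Fin 3 → G := ![1, y, y * x]
def w4 (x y z : G) : Fin 4 → G := ![1, z, z * y, z * y * x]

def nf (x y z : G) (p : Fin 2 × Fin 3 × Fin 4) : G :=
  w2 x p.1 * (w3 x y p.2.1 * w4 x y z p.2.2)

variable {x y z : G}

lemma step2 (hx : x * x = 1) (i : Fin 2) : ∃ i', w2 x i * x = w2 x i' := by
  fin_cases i
  · exact ⟨1, by simp [w2]⟩
  · exact ⟨0, by simp [w2, hx]⟩

lemma step3x (hx : x * x = 1) (j : Fin 3) :
    ∃ j', w3 x y j * x = w3 x y j' ∨ w3 x y j * x = x * w3 x y j' := by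
  fin_cases j
  · exact ⟨0, by simp [w3]⟩
  · exact ⟨2, by simp [w3]⟩
  · exact ⟨1, by simp [w3, mul_assoc, hx]⟩

lemma step3y (hy : y * y = 1) (hxy : y * (x * y) = x * (y * x)) (j : Fin 3) :
    ∃ j', w3 x y j * y = w3 x y j' ∨ w3 x y j * y = x * w3 x y j' := by
  fin_cases j
  · exact ⟨1, by simp [w3]⟩
  · exact ⟨0, by simp [w3, hy]⟩
  · exact ⟨2, by simp [w3, mul_assoc, hxy]⟩

lemma nf_aux (hx : x * x = 1) (i : Fin 2) (u v : G) (h : u = v ∨ u = x * v) :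
    ∃ i', w2 x i * u = w2 x i' * v := by
  rcases h with rfl | rfl
  · exact ⟨i, rfl⟩
  · obtain ⟨i', h⟩ := step2 hx i
    exact ⟨i', by rw [← mul_assoc, h]⟩

lemma nf_of (hx : x * x = 1) (hy : y * y = 1) (hxy : y * (x * y) = x * (y * x))
    (s : G) (p : Fin 2 × Fin 3 × Fin 4)
    (h : ∃ k, w4 x y z p.2.2 * s = w4 x y z k ∨ w4 x y z p.2.2 * s = x * w4 x y z k ∨
      w4 x y z p.2.2 * s = y * w4 x y z k) : ∃ q, nf x y z p * s = nf x y z q := by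
  obtain ⟨i, j, k⟩ := p
  obtain ⟨k', h⟩ := h
  simp only [nf, mul_assoc] at h ⊢
  have key : ∀ t : G, (∃ j', w3 x y j * t = w3 x y j' ∨ w3 x y j * t = x * w3 x y j') →
      w4 x y z k * s = t * w4 x y z k' →
      ∃ q : Fin 2 × Fin 3 × Fin 4, w2 x i * (w3 x y j * (w4 x y z k * s)) =
        w2 x q.1 * (w3 x y q.2.1 * w4 x y z q.2.2) := by
    rintro t ⟨j', hj⟩ e
    obtain ⟨i', hi⟩ := nf_aux hx i _ _ hj
    refine ⟨(i', j', k'), ?_⟩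
    rw [e]
    simp only [← mul_assoc] at hi ⊢
    rw [hi]
  rcases h with h | h | h
  · exact key 1 ⟨j, by simp⟩ (by simpa using h)
  · exact key x (step3x hx j) h
  · exact key y (step3y hy hxy j) h

lemma nf_x (hx : x * x = 1) (hy : y * y = 1) (hxy : y * (x * y) = x * (y * x))
    (hxz : z * x = x * z) (p) : ∃ q, nf x y z p * x = nf x y z q := by
  apply nf_of hx hy hxy
  obtain ⟨i, j, k⟩ := p
  fin_cases k
  · exact ⟨0, by simp [w4]⟩
  · exact ⟨1, by simp [w4, hxz]⟩
  · exact ⟨3, by simp [w4]⟩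
  · exact ⟨2, by simp [w4, mul_assoc, hx]⟩

lemma nf_y (hx : x * x = 1) (hy : y * y = 1) (hxy : y * (x * y) = x * (y * x))
    (hxz : z * x = x * z) (p) : ∃ q, nf x y z p * y = nf x y z q := by
  apply nf_of hx hy hxy
  obtain ⟨i, j, k⟩ := p
  fin_cases k
  · exact ⟨0, by simp [w4]⟩
  · exact ⟨2, by simp [w4]⟩
  · exact ⟨1, by simp [w4, mul_assoc, hy]⟩
  · refine ⟨3, Or.inr (Or.inl ?_)⟩
    have : z * (x * (y * x)) = x * (z * (y * x)) := by rw [← mul_assoc, hxz, mul_assoc]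
    simp [w4, mul_assoc, hxy, this]

lemma nf_z (hx : x * x = 1) (hy : y * y = 1) (hz : z * z = 1)
    (hxy : y * (x * y) = x * (y * x)) (hxz : z * x = x * z)
    (hyz : z * (y * z) = y * (z * y)) (p) : ∃ q, nf x y z p * z = nf x y z q := by
  apply nf_of hx hy hxy
  obtain ⟨i, j, k⟩ := p
  fin_cases k
  · exact ⟨1, by simp [w4]⟩
  · exact ⟨0, by simp [w4, hz]⟩
  · exact ⟨2, by simp [w4, mul_assoc, hyz]⟩
  · refine ⟨3, Or.inr (Or.inr ?_)⟩
    have : z * (y * (z * x)) = y * (z * (y * x)) := by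
      have := congrArg (· * x) hyz
      simpa [mul_assoc] using this
    simp [w4, mul_assoc, ← hxz, this]

lemma braid (hx : x * x = 1) (hy : y * y = 1) (h : (x * y) ^ 3 = 1) :
    y * (x * y) = x * (y * x) := by
  have hx' : x⁻¹ = x := inv_eq_of_mul_eq_one_left hx
  have hy' : y⁻¹ = y := inv_eq_of_mul_eq_one_left hy
  have : (x * (y * x)) * (y * (x * y)) = 1 := by rw [← h]; simp only [pow_succ, pow_zero, one_mul, mul_assoc]
  have h2 := eq_inv_of_mul_eq_one_right this
  simpa [hx', hy', mul_assoc] using h2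

lemma map_nf {H : Type*} [Group H] (f : G →* H) (p) :
    f (nf x y z p) = nf (f x) (f y) (f z) p := by
  obtain ⟨i, j, k⟩ := p
  fin_cases i <;> fin_cases j <;> fin_cases k <;> simp [nf, w2, w3, w4]

end aux

def gen : Fin 3 → Equiv.Perm (Fin 4) :=
  ![Equiv.swap 0 1, Equiv.swap 1 2, Equiv.swap 2 3]

lemma gen_rels : ∀ r ∈ rels33, FreeGroup.lift gen r = 1 := by
  intro r hr
  simp only [rels33, Set.mem_insert_iff, Set.mem_singleton_iff] at hr
  rcases hr with rfl | rfl | rfl | rfl | rfl | rfl <;>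
    simp only [a, b, c, map_pow, map_mul, FreeGroup.lift_apply_of] <;> decide

set_option maxRecDepth 100000 in
lemma nf_surj : ∀ s : Equiv.Perm (Fin 4), ∃ p, nf (gen 0) (gen 1) (gen 2) p = s := by
  decide

lemma nf_inj : Function.Injective (nf (gen 0) (gen 1) (gen 2)) := by
  have h : Function.Surjective (nf (gen 0) (gen 1) (gen 2)) := nf_surj
  refine ((Fintype.bijective_iff_surjective_and_card _).2 ⟨h, ?_⟩).1
  simp [Fintype.card_perm, Nat.factorial]

lemma exists_nf (g : PresentedGroup rels33) :
    ∃ q, g = nf (PresentedGroup.of 0) (PresentedGroup.of 1) (PresentedGroup.of 2) q := by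
  have R : ∀ r ∈ rels33, PresentedGroup.mk rels33 r = 1 := fun r hr =>
    PresentedGroup.one_of_mem hr
  set x : PresentedGroup rels33 := PresentedGroup.of 0 with hx0
  set y : PresentedGroup rels33 := PresentedGroup.of 1 with hy0
  set z : PresentedGroup rels33 := PresentedGroup.of 2 with hz0
  have hx : x * x = 1 := by
    rw [← pow_two]; exact R (a ^ 2) (by simp [rels33])
  have hy : y * y = 1 := by
    rw [← pow_two]; exact R (b ^ 2) (by simp [rels33])
  have hz : z * z = 1 := by
    rw [← pow_two]; exact R (c ^ 2) (by simp [rels33])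
  have hxy := braid hx hy (R ((a * b) ^ 3) (by simp [rels33]))
  have hyz := (braid hy hz (R ((b * c) ^ 3) (by simp [rels33])))
  have hxz : z * x = x * z := by
    have h : (x * z) ^ 2 = 1 := R ((a * c) ^ 2) (by simp [rels33])
    have h2 : (x * z) * (x * z) = 1 := by rw [← pow_two, h]
    have h3 := eq_inv_of_mul_eq_one_right h2
    rw [h3, mul_inv_rev, inv_eq_of_mul_eq_one_left hx, inv_eq_of_mul_eq_one_left hz]
  have hof : ∀ i : Fin 3, ∀ p, ∃ q,
      nf x y z p * PresentedGroup.mk rels33 (FreeGroup.of i) = nf x y z q := by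
    intro i
    fin_cases i
    · exact nf_x hx hy hxy hxz
    · exact nf_y hx hy hxy hxz
    · exact nf_z hx hy hz hxy hxz hyz
  have hinv : ∀ i : Fin 3, (PresentedGroup.mk rels33 (FreeGroup.of i))⁻¹ =
      PresentedGroup.mk rels33 (FreeGroup.of i) := by
    intro i
    fin_cases i
    · exact inv_eq_of_mul_eq_one_left hx
    · exact inv_eq_of_mul_eq_one_left hy
    · exact inv_eq_of_mul_eq_one_left hz
  have main : ∀ w : FreeGroup (Fin 3), ∀ p, ∃ q,
      nf x y z p * PresentedGroup.mk rels33 w = nf x y z q := by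
    intro w
    induction w using FreeGroup.induction_on with
    | C1 => exact fun p => ⟨p, by simp⟩
    | of i => exact hof i
    | inv_of i _ => rw [map_inv, hinv]; exact hof i
    | mul u v hu hv =>
      intro p
      obtain ⟨q, hq⟩ := hu p
      obtain ⟨r, hr⟩ := hv q
      exact ⟨r, by rw [map_mul, ← mul_assoc, hq, hr]⟩
  obtain ⟨w, rfl⟩ := PresentedGroup.mk_surjective rels33 g
  obtain ⟨q, hq⟩ := main w (0, 0, 0)
  exact ⟨q, by rw [← hq]; simp [nf, w2, w3, w4]⟩

/-- The presented group `⟨a, b, c | a², b², c², (ab)³, (ac)², (bc)³⟩` is isomorphic to the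
symmetric group `S₄`. -/
theorem presentedGroup_R33_iso_s4 :
    Nonempty (PresentedGroup rels33 ≃* Equiv.Perm (Fin 4)) := by
  have hf : ∀ p, PresentedGroup.toGroup gen_rels
      (nf (PresentedGroup.of 0) (PresentedGroup.of 1) (PresentedGroup.of 2) p) =
      nf (gen 0) (gen 1) (gen 2) p := by
    intro p
    rw [map_nf]
    simp only [PresentedGroup.toGroup.of]
  refine ⟨MulEquiv.ofBijective (PresentedGroup.toGroup gen_rels) ⟨?_, ?_⟩⟩
  · intro g h e
    obtain ⟨p, rfl⟩ := exists_nf g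
    obtain ⟨q, rfl⟩ := exists_nf h
    rw [hf, hf] at e
    rw [nf_inj e]
  · intro s
    obtain ⟨p, hp⟩ := nf_surj s
    exact ⟨_, (hf p).trans hp⟩

end Stmt15
end
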